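/- Fix n, d ∈ ℕ, 1 < p < ∞, x ∈ ℝ^n, and smooth vector fields X_0, X_1, …, X_d : ℝ^n → ℝ^n that are bounded and have bounded first and second derivatives. Let F : L^p([0,1], ℝ^d) → ℝ^n be the endpoint map F(u) = γ_u(1), where γ_u is the trajectory of u starting at x (F is Fréchet differentiable). Let J(u) = Σ_{i=1}^d ∫_0^1 |u_i(t)|^p dt, whose Fréchet differential at u is d_uJ(h) = Σ_{i=1}^d ∫_0^1 p·u_i|u_i|^{p−2} h_i dt. Let y ∈ ℝ^n be a regular value of F, i.e., for every u with F(u) = y the differential d_uF : L^p([0,1], ℝ^d) → ℝ^n is surjective. Suppose {u_k}_{k∈ℕ} is a sequence with F(u_k) = y for all k, the norms ‖u_k‖_p are bounded, and sup{ |d_{u_k}J(h)| : h ∈ ker d_{u_k}F, ‖h‖_p ≤ 1 } → 0 as k → ∞. Then {u_k} has a subsequence converging in the L^p norm. -/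

import Mathlib

open MeasureTheory Set Filter Topology

noncomputable section

/-- Trajectory on `[0,1]` of a control `u` starting at `x` for the affine control
system `γ' = X₀(γ) + Σᵢ uᵢ Xᵢ(γ)`. -/
def IsTrajectory {n d : ℕ}
    (X0 : EuclideanSpace ℝ (Fin n) → EuclideanSpace ℝ (Fin n))
    (X : Fin d → EuclideanSpace ℝ (Fin n) → EuclideanSpace ℝ (Fin n))
    (x : EuclideanSpace ℝ (Fin n))
    (u : ℝ → EuclideanSpace ℝ (Fin d))
    (γ : ℝ → EuclideanSpace ℝ (Fin n)) : Prop :=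
  ContinuousOn γ (Set.Icc 0 1) ∧
    ∀ t ∈ Set.Icc (0:ℝ) 1,
      γ t = x + ∫ s in (0:ℝ)..t, (X0 (γ s) + ∑ i, u s i • X i (γ s))

/-!
The primitive operator `u ↦ ∫₀ᵗ u` is compact on `L^p`, so a bounded sequence of controls has a
subsequence whose primitives converge uniformly. Integrating by parts and using Grönwall's
inequality, the endpoint map `F` is uniformly continuous on bounded sets with respect to the
primitives, and its second differences are quadratically small; together these facts give
convergence of the differentials `d_{u_k}F` in operator norm, to a surjective limit. Hence the right
inverses of `d_{u_k}F` stay bounded and `d_{u_k}J = λ_k ∘ d_{u_k}F + o(1)` with `λ_k` bounded in the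
finite-dimensional dual of `ℝ^n`, so `d_{u_k}J` subconverges in the dual norm. Finally `dJ` is
strictly monotone, with a gap controlling `‖u - w‖_p`, so `u_k` is Cauchy along this subsequence.
-/

section PosHomogeneous

variable {W : Type*} [NormedAddCommGroup W] [NormedSpace ℝ W] {p : ℝ} {f g : W → ℝ}

/-- Positive homogeneity of degree `p`; an inequality between two such functions only has to be
checked on the unit sphere. -/
def IsPosHomogeneous (p : ℝ) (f : W → ℝ) : Prop :=
  ∀ ⦃t : ℝ⦄, 0 < t → ∀ z, f (t • z) = t ^ p * f z

namespace IsPosHomogeneous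

lemma add (hf : IsPosHomogeneous p f) (hg : IsPosHomogeneous p g) :
    IsPosHomogeneous p fun z => f z + g z := fun t ht z => by
  simp only [hf ht, hg ht, mul_add]

lemma const_mul (c : ℝ) (hf : IsPosHomogeneous p f) : IsPosHomogeneous p fun z => c * f z :=
  fun t ht z => by simp only [hf ht, mul_left_comm]

lemma norm_rpow {V : Type*} [NormedAddCommGroup V] [NormedSpace ℝ V] (L : W →L[ℝ] V) :
    IsPosHomogeneous p fun z => ‖L z‖ ^ p := fun t ht z => by
  simp only [map_smul, norm_smul_of_nonneg ht.le, Real.mul_rpow ht.le (norm_nonneg _)]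

lemma le_of_sphere (hf : IsPosHomogeneous p f) (hg : IsPosHomogeneous p g) (h0 : f 0 ≤ g 0)
    (h : ∀ z, ‖z‖ = 1 → f z ≤ g z) (z : W) : f z ≤ g z := by
  rcases eq_or_ne z 0 with rfl | hz
  · exact h0
  have hpos : 0 < ‖z‖ := norm_pos_iff.2 hz
  rw [← smul_inv_smul₀ hpos.ne' z, hf hpos, hg hpos]
  gcongr
  exact h _ (norm_smul_inv_norm (𝕜 := ℝ) hz)

end IsPosHomogeneous

end PosHomogeneous

section HomogeneousGap

lemma one_le_norm_fst_add_norm_snd_of_norm_eq_one {V : Type*} [NormedAddCommGroup V]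
    {p : ℝ} {z : V × V} (hz : ‖z‖ = 1) :
    1 ≤ ‖z.1‖ ^ p + ‖z.2‖ ^ p := by
  have h₁ : 0 ≤ ‖z.1‖ ^ p := by positivity
  have h₂ : 0 ≤ ‖z.2‖ ^ p := by positivity
  rw [Prod.norm_def] at hz
  rcases max_choice ‖z.1‖ ‖z.2‖ with h | h <;> rw [h] at hz <;> rw [hz, Real.one_rpow] <;> linarith

variable {V : Type*} [NormedAddCommGroup V] [NormedSpace ℝ V] {p : ℝ} {g : V × V → ℝ}

/-- A continuous positively homogeneous function on pairs which is positive off the diagonal and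
zero on it. Its integral along two `L^p` functions controls their `L^p` distance. -/
structure IsHomogeneousGap (p : ℝ) (g : V × V → ℝ) : Prop where
  continuous : Continuous g
  homogeneous : IsPosHomogeneous p g
  apply_self : ∀ a, g (a, a) = 0
  pos_of_ne : ∀ ⦃a b⦄, a ≠ b → 0 < g (a, b)

lemma IsPosHomogeneous.norm_fst_add_norm_snd :
    IsPosHomogeneous p fun z : V × V => ‖z.1‖ ^ p + ‖z.2‖ ^ p :=
  (norm_rpow (.fst ℝ V V)).add (norm_rpow (.snd ℝ V V))

namespace IsHomogeneousGap

lemma nonneg (hg : IsHomogeneousGap p g) (a b : V) : 0 ≤ g (a, b) := by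
  rcases eq_or_ne a b with rfl | h
  · exact (hg.apply_self a).ge
  · exact (hg.pos_of_ne h).le

lemma exists_le_mul [FiniteDimensional ℝ V] (hg : IsHomogeneousGap p g) :
    ∃ K, ∀ z : V × V, g z ≤ K * (‖z.1‖ ^ p + ‖z.2‖ ^ p) := by
  have : ProperSpace V := FiniteDimensional.proper_real V
  obtain ⟨K, hK⟩ := (isCompact_sphere (0 : V × V) 1).bddAbove_image hg.continuous.continuousOn
  refine ⟨max K 0, hg.homogeneous.le_of_sphere
    (IsPosHomogeneous.norm_fst_add_norm_snd.const_mul _) ?_ fun z hz => ?_⟩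
  · exact (hg.apply_self 0).trans_le (by positivity)
  · calc g z ≤ max K 0 := (hK ⟨z, by simpa using hz, rfl⟩).trans (le_max_left _ _)
      _ ≤ max K 0 * (‖z.1‖ ^ p + ‖z.2‖ ^ p) :=
        le_mul_of_one_le_right (le_max_right _ _) (one_le_norm_fst_add_norm_snd_of_norm_eq_one hz)

lemma exists_pos_le_on_sphere [FiniteDimensional ℝ V] (hg : IsHomogeneousGap p g) (hp : 0 < p)
    {ε : ℝ} (hε : 0 < ε) :
    ∃ m > 0, ∀ z : V × V, ‖z‖ = 1 → ε ≤ ‖z.1 - z.2‖ ^ p → m ≤ g z := by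
  have : ProperSpace V := FiniteDimensional.proper_real V
  have hS : IsCompact (Metric.sphere (0 : V × V) 1 ∩ {z | ε ≤ ‖z.1 - z.2‖ ^ p}) :=
    (isCompact_sphere _ _).inter_right <| isClosed_le continuous_const <|
      (continuous_fst.sub continuous_snd).norm.rpow_const fun _ => .inr hp.le
  obtain ⟨m, hm, hmS⟩ := hS.exists_forall_le' (a := 0) hg.continuous.continuousOn <| by
    rintro ⟨a, b⟩ ⟨-, hab : ε ≤ ‖a - b‖ ^ p⟩
    refine hg.pos_of_ne fun h => hab.not_gt ?_
    rwa [h, sub_self, norm_zero, Real.zero_rpow hp.ne']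
  exact ⟨m, hm, fun z hz hz' => hmS z ⟨by simpa using hz, hz'⟩⟩

lemma exists_norm_sub_rpow_le [FiniteDimensional ℝ V] (hg : IsHomogeneousGap p g) (hp : 0 < p)
    {ε : ℝ} (hε : 0 < ε) :
    ∃ C, 0 ≤ C ∧ ∀ a b : V, ‖a - b‖ ^ p ≤ ε * (‖a‖ ^ p + ‖b‖ ^ p) + C * g (a, b) := by
  obtain ⟨m, hm, hmg⟩ := hg.exists_pos_le_on_sphere hp hε
  have key := (IsPosHomogeneous.norm_rpow (p := p)
    (ContinuousLinearMap.fst ℝ V V - ContinuousLinearMap.snd ℝ V V)).le_of_sphere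
    ((IsPosHomogeneous.norm_fst_add_norm_snd.const_mul ε).add
      (hg.homogeneous.const_mul (2 ^ p / m))) ?_ fun z hz => ?_
  · exact ⟨2 ^ p / m, by positivity, fun a b => key (a, b)⟩
  · have := hg.apply_self 0
    simp [Real.zero_rpow hp.ne', Prod.zero_eq_mk, this]
  have hsum := one_le_norm_fst_add_norm_snd_of_norm_eq_one (p := p) hz
  have hgz : 0 ≤ 2 ^ p / m * g z := mul_nonneg (by positivity) (hg.nonneg _ _)
  change ‖z.1 - z.2‖ ^ p ≤ _
  rcases le_total ε (‖z.1 - z.2‖ ^ p) with h | h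
  · have hz2 : ‖z.1 - z.2‖ ≤ 2 := (norm_sub_le _ _).trans <| by
      linarith [norm_fst_le z, norm_snd_le z]
    calc ‖z.1 - z.2‖ ^ p ≤ 2 ^ p := by gcongr
      _ = 2 ^ p / m * m := (div_mul_cancel₀ _ hm.ne').symm
      _ ≤ 2 ^ p / m * g z := by gcongr; exact hmg z hz h
      _ ≤ _ := le_add_of_nonneg_left (by positivity)
  · calc ‖z.1 - z.2‖ ^ p ≤ ε := h
      _ ≤ ε * (‖z.1‖ ^ p + ‖z.2‖ ^ p) := le_mul_of_one_le_right hε.le hsum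
      _ ≤ _ := le_add_of_nonneg_right hgz

end IsHomogeneousGap

end HomogeneousGap

section LpGap

variable {α V : Type*} [MeasurableSpace α] {μ : Measure α} [NormedAddCommGroup V] {p : ℝ}

lemma integrable_norm_rpow_coeFn_Lp (hp : 0 < p) (v : Lp V (ENNReal.ofReal p) μ) :
    Integrable (fun s => ‖v s‖ ^ p) μ := by
  simpa only [ENNReal.toReal_ofReal hp.le] using
    (Lp.memLp v).integrable_norm_rpow (by simpa using hp) ENNReal.ofReal_ne_top

lemma norm_rpow_Lp_eq_integral (hp : 0 < p) (v : Lp V (ENNReal.ofReal p) μ) :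
    ‖v‖ ^ p = ∫ s, ‖v s‖ ^ p ∂μ := by
  have h0 : 0 ≤ ∫ s, ‖v s‖ ^ p ∂μ := integral_nonneg fun s => by positivity
  rw [Lp.norm_def, (Lp.memLp v).eLpNorm_eq_integral_rpow_norm (by simpa using hp)
    ENNReal.ofReal_ne_top, ENNReal.toReal_ofReal hp.le, ENNReal.toReal_ofReal (by positivity),
    Real.rpow_inv_rpow h0 hp.ne']

variable [NormedSpace ℝ V] [FiniteDimensional ℝ V] {g : V × V → ℝ}

namespace IsHomogeneousGap

lemma integrable (hg : IsHomogeneousGap p g) (hp : 0 < p) (u v : Lp V (ENNReal.ofReal p) μ) :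
    Integrable (fun s => g (u s, v s)) μ := by
  obtain ⟨K, hK⟩ := hg.exists_le_mul
  refine (((integrable_norm_rpow_coeFn_Lp hp u).add
    (integrable_norm_rpow_coeFn_Lp hp v)).const_mul K).mono' ?_ (.of_forall fun s => ?_)
  · exact hg.continuous.comp_aestronglyMeasurable
      ((Lp.aestronglyMeasurable u).prodMk (Lp.aestronglyMeasurable v))
  · rw [Real.norm_of_nonneg (hg.nonneg _ _)]
    exact hK _

lemma exists_norm_sub_rpow_Lp_le (hg : IsHomogeneousGap p g) (hp : 0 < p) {ε : ℝ} (hε : 0 < ε) :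
    ∃ K, 0 ≤ K ∧ ∀ u v : Lp V (ENNReal.ofReal p) μ,
      ‖u - v‖ ^ p ≤ ε * (‖u‖ ^ p + ‖v‖ ^ p) + K * ∫ s, g (u s, v s) ∂μ := by
  obtain ⟨K, hK0, hK⟩ := hg.exists_norm_sub_rpow_le hp hε
  refine ⟨K, hK0, fun u v => ?_⟩
  have hu := integrable_norm_rpow_coeFn_Lp hp u
  have hv := integrable_norm_rpow_coeFn_Lp hp v
  have hi := (hg.integrable hp u v).const_mul K
  simp only [norm_rpow_Lp_eq_integral hp]
  rw [← integral_add hu hv, ← integral_const_mul, ← integral_const_mul,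
    ← integral_add (by exact (hu.add hv).const_mul ε) hi]
  refine integral_mono_ae (integrable_norm_rpow_coeFn_Lp hp _)
    (by exact ((hu.add hv).const_mul ε).add hi) ?_
  filter_upwards [Lp.coeFn_sub u v] with s hs
  simpa only [hs, Pi.sub_apply] using hK (u s) (v s)

lemma exists_norm_sub_lt [Fact (1 ≤ ENNReal.ofReal p)] (hg : IsHomogeneousGap p g) (C : ℝ) {ε : ℝ}
    (hε : 0 < ε) :
    ∃ δ > 0, ∀ u v : Lp V (ENNReal.ofReal p) μ, ‖u‖ ≤ C → ‖v‖ ≤ C →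
      ∫ s, g (u s, v s) ∂μ ≤ δ → ‖u - v‖ < ε := by
  have hp : 0 < p := one_pos.trans_le (ENNReal.one_le_ofReal.1 Fact.out)
  have hεp : 0 < ε ^ p := Real.rpow_pos_of_pos hε p
  obtain ⟨K, hK0, hK⟩ := hg.exists_norm_sub_rpow_Lp_le (μ := μ) hp
    (ε := ε ^ p / (4 * (|C| ^ p + 1))) (by positivity)
  refine ⟨ε ^ p / (4 * (K + 1)), by positivity, fun u v hu hv hδ => ?_⟩
  have hpow : ∀ w : Lp V (ENNReal.ofReal p) μ, ‖w‖ ≤ C → ‖w‖ ^ p ≤ |C| ^ p + 1 := fun w hw =>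
    (Real.rpow_le_rpow (norm_nonneg _) (hw.trans (le_abs_self C)) hp.le).trans (by linarith)
  refine (Real.rpow_lt_rpow_iff (norm_nonneg _) hε.le hp).1 ?_
  calc ‖u - v‖ ^ p
      ≤ ε ^ p / (4 * (|C| ^ p + 1)) * (‖u‖ ^ p + ‖v‖ ^ p) + K * ∫ s, g (u s, v s) ∂μ := hK u v
    _ ≤ ε ^ p / (4 * (|C| ^ p + 1)) * (|C| ^ p + 1 + (|C| ^ p + 1))
        + (K + 1) * (ε ^ p / (4 * (K + 1))) := by
      have hg0 : 0 ≤ ∫ s, g (u s, v s) ∂μ := integral_nonneg fun s => hg.nonneg _ _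
      gcongr
      exacts [hpow u hu, hpow v hv, by linarith]
    _ = ε ^ p * (3 / 4) := by field_simp; ring
    _ < ε ^ p := by linarith

end IsHomogeneousGap

end LpGap

section UniformConvexity

variable {α V : Type*} [MeasurableSpace α] {μ : Measure α} [NormedAddCommGroup V]
  [NormedSpace ℝ V] {p : ℝ}

/-- The defect of midpoint convexity of `‖·‖ ^ p`. -/
def midpointGap (p : ℝ) (z : V × V) : ℝ :=
  (‖z.1‖ ^ p + ‖z.2‖ ^ p) / 2 - ‖(1 / 2 : ℝ) • (z.1 + z.2)‖ ^ p

lemma midpointGap_pos [StrictConvexSpace ℝ V] (hp : 1 < p) {a b : V} (hab : a ≠ b) :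
    0 < midpointGap p (a, b) := by
  have hp0 : 0 < p := by linarith
  rw [midpointGap, sub_pos]
  by_cases h : ‖a‖ = ‖b‖
  · have := Real.rpow_lt_rpow (norm_nonneg _) ((norm_midpoint_lt_iff h).2 hab) hp0
    rwa [← h, add_self_div_two]
  calc ‖(1 / 2 : ℝ) • (a + b)‖ ^ p ≤ (1 / 2 * ‖a‖ + 1 / 2 * ‖b‖) ^ p := by
        rw [norm_smul_of_nonneg (by norm_num), ← mul_add]
        gcongr
        exact norm_add_le a b
    _ < 1 / 2 * ‖a‖ ^ p + 1 / 2 * ‖b‖ ^ p :=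
        (strictConvexOn_rpow hp).2 (norm_nonneg a) (norm_nonneg b) h (by norm_num) (by norm_num)
          (by norm_num)
    _ = (‖a‖ ^ p + ‖b‖ ^ p) / 2 := by ring

lemma isHomogeneousGap_midpointGap [StrictConvexSpace ℝ V] (hp : 1 < p) :
    IsHomogeneousGap p (midpointGap (V := V) p) where
  continuous := by
    have hc : Continuous fun a : V => ‖a‖ ^ p :=
      continuous_norm.rpow_const fun _ => .inr (by linarith)
    exact (((hc.comp continuous_fst).add (hc.comp continuous_snd)).div_const 2).sub
      (hc.comp ((continuous_fst.add continuous_snd).const_smul _))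
  homogeneous t ht z := by
    simp only [midpointGap, Prod.smul_fst, Prod.smul_snd, ← smul_add, smul_comm (1 / 2 : ℝ) t,
      norm_smul_of_nonneg ht.le, Real.mul_rpow ht.le (norm_nonneg _)]
    ring
  apply_self a := by
    rw [midpointGap, show (1 / 2 : ℝ) • (a + a) = a by module]
    ring
  pos_of_ne a b hab := midpointGap_pos hp hab

lemma integral_midpointGap (hp : 0 < p) (u v : Lp V (ENNReal.ofReal p) μ) :
    ∫ s, midpointGap p (u s, v s) ∂μ = (‖u‖ ^ p + ‖v‖ ^ p) / 2 - ‖(1 / 2 : ℝ) • (u + v)‖ ^ p := by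
  have hu := integrable_norm_rpow_coeFn_Lp hp u
  have hv := integrable_norm_rpow_coeFn_Lp hp v
  simp only [norm_rpow_Lp_eq_integral hp]
  rw [← integral_add hu hv, ← integral_div, ← integral_sub (by exact (hu.add hv).div_const 2)
    (integrable_norm_rpow_coeFn_Lp hp _)]
  refine integral_congr_ae ?_
  filter_upwards [Lp.coeFn_smul (1 / 2 : ℝ) (u + v), Lp.coeFn_add u v] with s h₁ h₂
  rw [midpointGap, h₁, Pi.smul_apply, h₂, Pi.add_apply]

theorem uniformConvexSpace_Lp [FiniteDimensional ℝ V] [StrictConvexSpace ℝ V] (hp : 1 < p)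
    [Fact (1 ≤ ENNReal.ofReal p)] : UniformConvexSpace (Lp V (ENNReal.ofReal p) μ) where
  uniform_convex ε hε := by
    obtain ⟨δ, hδ, hgap⟩ := (isHomogeneousGap_midpointGap (V := V) hp).exists_norm_sub_lt
      (μ := μ) 1 hε
    refine ⟨2 * δ / p, by positivity, fun u hu v hv huv => ?_⟩
    have hmid : δ < 1 - ‖(1 / 2 : ℝ) • (u + v)‖ ^ p := by
      have := mt (hgap u v hu.le hv.le) huv.not_gt
      rwa [integral_midpointGap (one_pos.trans hp), hu, hv, Real.one_rpow, add_self_div_two,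
        not_le] at this
    have hbern := one_add_mul_self_le_rpow_one_add (s := ‖(1 / 2 : ℝ) • (u + v)‖ - 1)
      (by linarith [norm_nonneg ((1 / 2 : ℝ) • (u + v))]) hp.le
    rw [add_sub_cancel, norm_smul_of_nonneg (by norm_num)] at hbern
    rw [norm_smul_of_nonneg (by norm_num)] at hmid
    have : δ ≤ p * (1 - 1 / 2 * ‖u + v‖) := by linarith
    rw [← sub_nonneg] at this ⊢
    have hdiv := div_nonneg (mul_nonneg zero_le_two this) (one_pos.trans hp).le
    refine hdiv.trans_eq ?_
    field_simp
    ring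

end UniformConvexity

section CostDifferential

variable {p : ℝ}

/-- The signed power `a ↦ a |a| ^ (p - 2)`, the derivative of `|·| ^ p / p`. -/
def signedRpow (p a : ℝ) : ℝ := a * |a| ^ (p - 2)

lemma signedRpow_of_nonneg (hp : 1 < p) {a : ℝ} (ha : 0 ≤ a) : signedRpow p a = a ^ (p - 1) := by
  rcases ha.eq_or_lt with rfl | ha
  · rw [signedRpow, zero_mul, Real.zero_rpow (by linarith)]
  · rw [signedRpow, abs_of_pos ha, mul_comm, ← Real.rpow_add_one ha.ne']
    ring_nf

lemma signedRpow_neg (a : ℝ) : signedRpow p (-a) = -signedRpow p a := by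
  rw [signedRpow, signedRpow, abs_neg, neg_mul]

lemma abs_signedRpow (hp : 1 < p) (a : ℝ) : |signedRpow p a| = |a| ^ (p - 1) := by
  rw [← signedRpow_of_nonneg hp (abs_nonneg a), signedRpow, signedRpow, abs_mul, abs_abs,
    abs_of_nonneg (a := |a| ^ (p - 2)) (by positivity)]

lemma signedRpow_mul {t : ℝ} (ht : 0 < t) (a : ℝ) :
    signedRpow p (t * a) = t ^ (p - 1) * signedRpow p a := by
  rw [signedRpow, signedRpow, abs_mul, abs_of_pos ht, Real.mul_rpow ht.le (abs_nonneg a),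
    show p - 1 = p - 2 + 1 by ring, Real.rpow_add_one ht.ne']
  ring

lemma continuous_signedRpow (hp : 1 < p) : Continuous (signedRpow p) := by
  have h : signedRpow p = fun a => if 0 ≤ a then a ^ (p - 1) else -(-a) ^ (p - 1) := by
    funext a
    split_ifs with ha
    · exact signedRpow_of_nonneg hp ha
    · rw [← signedRpow_of_nonneg hp (by linarith), signedRpow_neg, neg_neg]
  rw [h]
  refine Continuous.if_le (continuous_id.rpow_const fun _ => .inr (by linarith))
    (continuous_neg.rpow_const fun _ => .inr (by linarith)).neg continuous_const continuous_id ?_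
  rintro _ rfl
  simp [Real.zero_rpow (by linarith : p - 1 ≠ 0)]

lemma strictMono_signedRpow (hp : 1 < p) : StrictMono (signedRpow p) := by
  refine strictMono_of_odd_strictMonoOn_nonneg signedRpow_neg fun a ha b hb hab => ?_
  rw [signedRpow_of_nonneg hp ha, signedRpow_of_nonneg hp hb]
  exact Real.rpow_lt_rpow ha hab (by linarith)

lemma abs_signedRpow_mul_le (hp : 1 < p) {a b A B : ℝ} (ha : |a| ≤ A) (hb : |b| ≤ B) :
    |signedRpow p a * b| ≤ A ^ p + B ^ p := by
  have hA : 0 ≤ A := (abs_nonneg a).trans ha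
  have hB : 0 ≤ B := (abs_nonneg b).trans hb
  have hm : 0 ≤ max A B := le_max_of_le_left hA
  calc |signedRpow p a * b| = |a| ^ (p - 1) * |b| := by rw [abs_mul, abs_signedRpow hp]
    _ ≤ max A B ^ (p - 1) * max A B := by
      have : 0 ≤ p - 1 := by linarith
      gcongr
      exacts [ha.trans (le_max_left _ _), hb.trans (le_max_right _ _)]
    _ = max A B ^ p := by rw [← Real.rpow_add_one' hm (by linarith), sub_add_cancel]
    _ ≤ A ^ p + B ^ p := by
      rcases max_choice A B with h | h <;> rw [h]
      exacts [le_add_of_nonneg_right (by positivity), le_add_of_nonneg_left (by positivity)]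

variable {ι : Type*} [Fintype ι]

/-- The pairing `(φ(a) - φ(b)) · (a - b)` of the monotone map `φ` which applies `signedRpow p`
to each coordinate. -/
def monotonicityGap (p : ℝ) (z : EuclideanSpace ℝ ι × EuclideanSpace ℝ ι) : ℝ :=
  ∑ i, (signedRpow p (z.1 i) - signedRpow p (z.2 i)) * (z.1 i - z.2 i)

lemma isHomogeneousGap_monotonicityGap (hp : 1 < p) :
    IsHomogeneousGap p (monotonicityGap (ι := ι) p) where
  continuous := by
    have hφ := continuous_signedRpow hp
    unfold monotonicityGap
    fun_prop
  homogeneous t ht z := by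
    rw [monotonicityGap, monotonicityGap, Finset.mul_sum]
    refine Finset.sum_congr rfl fun i _ => ?_
    simp only [Prod.smul_fst, Prod.smul_snd, PiLp.smul_apply, smul_eq_mul, signedRpow_mul ht]
    rw [← sub_add_cancel p 1, Real.rpow_add_one ht.ne', add_sub_cancel_right]
    ring
  apply_self a := by simp [monotonicityGap]
  pos_of_ne a b hab := by
    have hle : ∀ r s : ℝ, 0 ≤ (signedRpow p r - signedRpow p s) * (r - s) := fun r s =>
      ((strictMono_signedRpow hp).monotone.monovary monotone_id).sub_mul_sub_nonneg s r
    obtain ⟨i, hi⟩ : ∃ i, a i ≠ b i := by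
      by_contra! h
      exact hab (PiLp.ext h)
    refine Finset.sum_pos' (fun i _ => hle _ _) ⟨i, Finset.mem_univ i, (hle _ _).lt_of_ne' ?_⟩
    exact mul_ne_zero (sub_ne_zero.2 ((strictMono_signedRpow hp).injective.ne hi))
      (sub_ne_zero.2 hi)

variable {α : Type*} [MeasurableSpace α] {μ : Measure α}

lemma integrable_signedRpow_mul (hp : 1 < p) (u h : Lp (EuclideanSpace ℝ ι) (ENNReal.ofReal p) μ)
    (i : ι) : Integrable (fun s => signedRpow p (u s i) * h s i) μ := by
  refine ((integrable_norm_rpow_coeFn_Lp (one_pos.trans hp) u).add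
    (integrable_norm_rpow_coeFn_Lp (one_pos.trans hp) h)).mono' ?_ (.of_forall fun s => ?_)
  · have hc : ∀ v : Lp (EuclideanSpace ℝ ι) (ENNReal.ofReal p) μ,
        AEStronglyMeasurable (fun s => v s i) μ := fun v =>
      (EuclideanSpace.proj (𝕜 := ℝ) i).continuous.comp_aestronglyMeasurable
        (Lp.aestronglyMeasurable v)
    exact ((continuous_signedRpow hp).comp_aestronglyMeasurable (hc u)).mul (hc h)
  · exact abs_signedRpow_mul_le hp (PiLp.norm_apply_le (u s) i) (PiLp.norm_apply_le (h s) i)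

/-- The linear form underlying `costDifferential`. -/
def costDifferentialₗ (hp : 1 < p) (u : Lp (EuclideanSpace ℝ ι) (ENNReal.ofReal p) μ) :
    Lp (EuclideanSpace ℝ ι) (ENNReal.ofReal p) μ →ₗ[ℝ] ℝ where
  toFun h := ∑ i, ∫ s, p * signedRpow p (u s i) * h s i ∂μ
  map_add' h k := by
    rw [← Finset.sum_add_distrib]
    refine Finset.sum_congr rfl fun i _ => ?_
    simp only [mul_assoc, integral_const_mul]
    rw [← mul_add, ← integral_add (integrable_signedRpow_mul hp u h i)
      (integrable_signedRpow_mul hp u k i)]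
    congr 1
    refine integral_congr_ae ?_
    filter_upwards [Lp.coeFn_add h k] with s hs
    rw [hs, Pi.add_apply, PiLp.add_apply, mul_add]
  map_smul' c h := by
    rw [RingHom.id_apply, smul_eq_mul, Finset.mul_sum]
    refine Finset.sum_congr rfl fun i _ => ?_
    rw [← integral_const_mul]
    refine integral_congr_ae ?_
    filter_upwards [Lp.coeFn_smul c h] with s hs
    rw [hs, Pi.smul_apply, PiLp.smul_apply, smul_eq_mul, mul_left_comm]

lemma abs_costDifferentialₗ_le (hp : 1 < p)
    (u h : Lp (EuclideanSpace ℝ ι) (ENNReal.ofReal p) μ) :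
    |costDifferentialₗ hp u h| ≤ Fintype.card ι * (p * (‖u‖ ^ p + ‖h‖ ^ p)) := by
  have hp0 : 0 < p := one_pos.trans hp
  have hu := integrable_norm_rpow_coeFn_Lp hp0 u
  have hh := integrable_norm_rpow_coeFn_Lp hp0 h
  rw [← nsmul_eq_mul]
  refine (Finset.abs_sum_le_sum_abs _ _).trans (Finset.sum_le_card_nsmul _ _ _ fun i _ => ?_)
  simp only [mul_assoc, integral_const_mul, abs_mul, abs_of_pos hp0]
  rw [norm_rpow_Lp_eq_integral hp0, norm_rpow_Lp_eq_integral hp0, ← integral_add hu hh]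
  gcongr
  rw [← Real.norm_eq_abs]
  refine norm_integral_le_of_norm_le (hu.add hh) (.of_forall fun s => ?_)
  exact abs_signedRpow_mul_le hp (PiLp.norm_apply_le (u s) i) (PiLp.norm_apply_le (h s) i)

variable [Fact (1 ≤ ENNReal.ofReal p)]

lemma abs_costDifferentialₗ_le_mul_norm (hp : 1 < p)
    (u h : Lp (EuclideanSpace ℝ ι) (ENNReal.ofReal p) μ) :
    |costDifferentialₗ hp u h| ≤ Fintype.card ι * (p * (‖u‖ ^ p + 1)) * ‖h‖ := by
  have hp0 : 0 < p := one_pos.trans hp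
  rw [← div_one (Fintype.card ι * (p * (‖u‖ ^ p + 1)))]
  refine LinearMap.bound_of_ball_bound' one_pos _ (costDifferentialₗ hp u) (fun k hk => ?_) h
  have hk1 : ‖k‖ ^ p ≤ 1 :=
    Real.rpow_le_one (norm_nonneg k) (mem_closedBall_zero_iff.1 hk) hp0.le
  exact (abs_costDifferentialₗ_le hp u k).trans (by gcongr)

/-- The Fréchet differential `h ↦ ∑ i, ∫ p u i |u i| ^ (p - 2) h i` at `u` of the cost
`∑ i, ∫ |u i| ^ p` on `L^p`. -/
def costDifferential (hp : 1 < p) (u : Lp (EuclideanSpace ℝ ι) (ENNReal.ofReal p) μ) :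
    Lp (EuclideanSpace ℝ ι) (ENNReal.ofReal p) μ →L[ℝ] ℝ :=
  (costDifferentialₗ hp u).mkContinuous (Fintype.card ι * (p * (‖u‖ ^ p + 1)))
    (abs_costDifferentialₗ_le_mul_norm hp u)

lemma norm_costDifferential_le (hp : 1 < p) (u : Lp (EuclideanSpace ℝ ι) (ENNReal.ofReal p) μ) :
    ‖costDifferential hp u‖ ≤ Fintype.card ι * (p * (‖u‖ ^ p + 1)) :=
  LinearMap.mkContinuous_norm_le _ (by have := one_pos.trans hp; positivity) _

lemma costDifferential_sub_apply_sub (hp : 1 < p)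
    (u v : Lp (EuclideanSpace ℝ ι) (ENNReal.ofReal p) μ) :
    (costDifferential hp u - costDifferential hp v) (u - v) =
      p * ∫ s, monotonicityGap p (u s, v s) ∂μ := by
  have hi := fun w i => integrable_signedRpow_mul hp w (u - v) i
  have hgap : (fun s => monotonicityGap p (u s, v s)) =ᵐ[μ] fun s =>
      ∑ i, (signedRpow p (u s i) * (u - v) s i - signedRpow p (v s i) * (u - v) s i) := by
    filter_upwards [Lp.coeFn_sub u v] with s hs
    simp only [monotonicityGap, hs, Pi.sub_apply, PiLp.sub_apply, ← sub_mul]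
  rw [integral_congr_ae hgap, integral_finsetSum _ fun i _ => by exact (hi u i).sub (hi v i),
    Finset.mul_sum]
  change costDifferentialₗ hp u _ - costDifferentialₗ hp v _ = _
  simp only [costDifferentialₗ, LinearMap.coe_mk, AddHom.coe_mk]
  rw [← Finset.sum_sub_distrib]
  refine Finset.sum_congr rfl fun i _ => ?_
  rw [integral_sub (hi u i) (hi v i)]
  simp only [mul_assoc, integral_const_mul, mul_sub]

lemma exists_norm_sub_lt_of_norm_costDifferential_sub_le (hp : 1 < p) (C : ℝ) {ε : ℝ}
    (hε : 0 < ε) :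
    ∃ δ > 0, ∀ u v : Lp (EuclideanSpace ℝ ι) (ENNReal.ofReal p) μ, ‖u‖ ≤ C → ‖v‖ ≤ C →
      ‖costDifferential hp u - costDifferential hp v‖ ≤ δ → ‖u - v‖ < ε := by
  obtain ⟨δ, hδ, hgap⟩ :=
    (isHomogeneousGap_monotonicityGap (ι := ι) hp).exists_norm_sub_lt (μ := μ) C hε
  refine ⟨p * δ / (|C| + |C| + 1), by positivity, fun u v hu hv huv => hgap u v hu hv ?_⟩
  have hdist : ‖u - v‖ ≤ |C| + |C| + 1 := by
    linarith [norm_sub_le u v, hu.trans (le_abs_self C), hv.trans (le_abs_self C)]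
  have hp0 : 0 < p := one_pos.trans hp
  refine le_of_mul_le_mul_left ?_ hp0
  calc p * ∫ s, monotonicityGap p (u s, v s) ∂μ
      = (costDifferential hp u - costDifferential hp v) (u - v) :=
        (costDifferential_sub_apply_sub hp u v).symm
    _ ≤ ‖costDifferential hp u - costDifferential hp v‖ * ‖u - v‖ :=
        (Real.le_norm_self _).trans (ContinuousLinearMap.le_opNorm _ _)
    _ ≤ p * δ / (|C| + |C| + 1) * (|C| + |C| + 1) := by gcongr
    _ = p * δ := div_mul_cancel₀ _ (by positivity)

end CostDifferential

section UniformConvexCompactness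

variable {E : Type*} [NormedAddCommGroup E] [NormedSpace ℝ E] [UniformConvexSpace E]

lemma exists_norm_sub_lt_of_le_norm_add {r : ℝ} (hr : 0 ≤ r) {ε : ℝ} (hε : 0 < ε) :
    ∃ δ > 0, ∀ x y : E, ‖x‖ ≤ r + δ → ‖y‖ ≤ r + δ → 2 * (r - δ) ≤ ‖x + y‖ → ‖x - y‖ < ε := by
  obtain ⟨η, hη, hconv⟩ := exists_forall_closed_ball_dist_add_le_two_mul_sub E (half_pos hε) r
  have hδ : 0 < min (ε / 5) (η / 5) := by positivity
  set δ := min (ε / 5) (η / 5)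
  have hδε : δ ≤ ε / 5 := min_le_left _ _
  have hδη : δ ≤ η / 5 := min_le_right _ _
  have hscale : ∀ x : E, ‖x‖ ≤ r + δ → ∃ z : E, ‖z‖ ≤ r ∧ ‖x - z‖ ≤ δ := fun x hx => by
    obtain ⟨z, hxz, hz⟩ := exists_dist_le_le (x := x) (z := 0) hδ.le hr (by simpa using hx)
    exact ⟨z, by simpa using hz, by simpa [dist_eq_norm] using hxz⟩
  refine ⟨δ, hδ, fun x y hx hy hxy => ?_⟩
  by_contra! hge
  obtain ⟨x', hx', hxx'⟩ := hscale x hx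
  obtain ⟨y', hy', hyy'⟩ := hscale y hy
  have hsub : ‖x - y‖ ≤ ‖x' - y'‖ + (‖x - x'‖ + ‖y - y'‖) := by
    rw [show x - y = x' - y' + ((x - x') - (y - y')) by abel]
    exact (norm_add_le _ _).trans (add_le_add_right (norm_sub_le _ _) _)
  have hadd : ‖x + y‖ ≤ ‖x' + y'‖ + (‖x - x'‖ + ‖y - y'‖) := by
    rw [show x + y = x' + y' + ((x - x') + (y - y')) by abel]
    exact (norm_add_le _ _).trans (add_le_add_right (norm_add_le _ _) _)
  have := hconv hx' hy' (by linarith)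
  linarith

/-- Šmulian's theorem for uniformly convex spaces. -/
theorem nonempty_iInter_of_antitone_of_convex [CompleteSpace E] {K : ℕ → Set E}
    (hK : Antitone K) (hne : ∀ m, (K m).Nonempty) (hclosed : ∀ m, IsClosed (K m))
    (hconv : ∀ m, Convex ℝ (K m)) (hbdd : Bornology.IsBounded (K 0)) : (⋂ m, K m).Nonempty := by
  set d : ℕ → ℝ := fun m => Metric.infDist 0 (K m)
  have hd_mono : Monotone d := fun m l h => Metric.infDist_le_infDist_of_subset (hK h) (hne l)
  have hd_le : ∀ m, ∀ x ∈ K m, d m ≤ ‖x‖ := fun m x hx => by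
    simpa using Metric.infDist_le_dist_of_mem (x := 0) hx
  have hd_bdd : BddAbove (range d) := by
    obtain ⟨C, hC⟩ := hbdd.exists_norm_le
    refine ⟨C, ?_⟩
    rintro _ ⟨m, rfl⟩
    obtain ⟨x, hx⟩ := hne m
    exact (hd_le m x hx).trans (hC x (hK (Nat.zero_le m) hx))
  have hd_lim : Tendsto d atTop (𝓝 (⨆ m, d m)) := tendsto_atTop_ciSup hd_mono hd_bdd
  set r := ⨆ m, d m
  have hr : 0 ≤ r := Metric.infDist_nonneg.trans (le_ciSup hd_bdd 0)
  have hx : ∀ m : ℕ, ∃ x ∈ K m, ‖x‖ < r + 1 / (m + 1) := fun m => by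
    have : Metric.infDist 0 (K m) < r + 1 / (m + 1) :=
      (le_ciSup hd_bdd m).trans_lt (lt_add_of_pos_right _ Nat.one_div_pos_of_nat)
    simpa using (Metric.infDist_lt_iff (hne m)).1 this
  choose x hxK hx_norm using hx
  have hcauchy : CauchySeq x := by
    refine Metric.cauchySeq_iff'.2 fun ε hε => ?_
    obtain ⟨δ, hδ, hsub⟩ := exists_norm_sub_lt_of_le_norm_add (E := E) hr hε
    obtain ⟨N, hNd, hNδ⟩ := ((hd_lim.eventually_const_lt (sub_lt_self r hδ)).and
      ((tendsto_one_div_add_atTop_nhds_zero_nat (𝕜 := ℝ)).eventually_lt_const hδ)).exists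
    have hnorm : ∀ m ≥ N, ‖x m‖ ≤ r + δ := fun m hm => (hx_norm m).le.trans <|
      add_le_add_right ((Nat.one_div_le_one_div hm).trans hNδ.le) r
    refine ⟨N, fun m hm => ?_⟩
    rw [dist_eq_norm]
    refine hsub _ _ (hnorm m hm) (hnorm N le_rfl) ?_
    have hmem := hconv N (hK hm (hxK m)) (hxK N) one_half_pos.le one_half_pos.le (by norm_num)
    have := hd_le N _ hmem
    rw [← smul_add, norm_smul_of_nonneg one_half_pos.le] at this
    linarith
  obtain ⟨w, hw⟩ := cauchySeq_tendsto_of_complete hcauchy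
  refine ⟨w, mem_iInter.2 fun m => (hclosed m).mem_of_tendsto hw ?_⟩
  filter_upwards [eventually_ge_atTop m] with l hl using hK hl (hxK l)

variable {G : Type*} [NormedAddCommGroup G] [NormedSpace ℝ G]

/-- The sequential content of weak compactness of balls: a compact operator turns a weakly
convergent subsequence into a norm convergent one. -/
theorem exists_subseq_tendsto_apply_of_isCompactOperator [CompleteSpace E] {T : E →L[ℝ] G}
    (hT : IsCompactOperator T) {u : ℕ → E} {C : ℝ} (hu : ∀ k, ‖u k‖ ≤ C) :
    ∃ (φ : ℕ → ℕ) (w : E), StrictMono φ ∧ ‖w‖ ≤ C ∧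
      Tendsto (fun k => T (u (φ k))) atTop (𝓝 (T w)) := by
  obtain ⟨g, -, φ, hφ, hg⟩ := (hT.isCompact_closure_image_closedBall C).tendsto_subseq
    (x := fun k => T (u k))
    fun k => subset_closure (mem_image_of_mem T (mem_closedBall_zero_iff.2 (hu k)))
  set S : ℕ → Set E := fun m => (fun k => u (φ k)) '' Ici m
  have hsub : ∀ m, ∀ A : Set E, Convex ℝ A → IsClosed A → (∀ k ≥ m, u (φ k) ∈ A) →
      closure (convexHull ℝ (S m)) ⊆ A := fun m A hA hA' h =>
    closure_minimal (convexHull_min (image_subset_iff.2 h) hA) hA'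
  have hball : ∀ m, closure (convexHull ℝ (S m)) ⊆ Metric.closedBall 0 C := fun m =>
    hsub m _ (convex_closedBall 0 C) Metric.isClosed_closedBall fun k _ =>
      mem_closedBall_zero_iff.2 (hu _)
  obtain ⟨w, hw⟩ := nonempty_iInter_of_antitone_of_convex
    (K := fun m => closure (convexHull ℝ (S m)))
    (fun m l h => closure_mono (convexHull_mono (image_mono (Ici_subset_Ici.2 h))))
    (fun m => ⟨u (φ m), subset_closure (subset_convexHull ℝ _ ⟨m, self_mem_Ici, rfl⟩)⟩)
    (fun m => isClosed_closure) (fun m => (convex_convexHull ℝ _).closure)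
    (Metric.isBounded_closedBall.subset (hball 0))
  rw [mem_iInter] at hw
  have hTw : T w = g := by
    refine eq_of_forall_dist_le fun ε hε => ?_
    obtain ⟨m, hm⟩ := Metric.tendsto_atTop.1 hg ε hε
    exact hsub m (T ⁻¹' Metric.closedBall g ε)
      ((convex_closedBall g ε).linear_preimage T.toLinearMap)
      (Metric.isClosed_closedBall.preimage T.continuous) (fun k hk => (hm k hk).le) (hw m)
  exact ⟨φ, w, hφ, mem_closedBall_zero_iff.1 (hball 0 (hw 0)), hTw ▸ hg⟩

end UniformConvexCompactness

section FiniteDimensionalTarget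

variable {E W : Type*} [NormedAddCommGroup E] [NormedSpace ℝ E]
  [NormedAddCommGroup W] [NormedSpace ℝ W]

/-- The difference quotients `2 ^ m • (F (v + 2⁻ᵐ h) - F v)` form a geometric Cauchy sequence whose
increments are second differences. -/
lemma norm_sub_sub_fderiv_le_of_second_difference_le {F : E → W} {D : E →L[ℝ] W} {v : E}
    (hF : HasFDerivAt F D v) {G : ℝ}
    (hG : ∀ h, ‖h‖ ≤ 1 → ‖F (v + h + h) - (2 : ℝ) • F (v + h) + F v‖ ≤ G * ‖h‖ ^ 2)
    {h : E} (hh : ‖h‖ ≤ 1) : ‖F (v + h) - F v - D h‖ ≤ G * ‖h‖ ^ 2 := by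
  set a : ℕ → W := fun m => (2 : ℝ) ^ m • (F (v + ((2 : ℝ) ^ m)⁻¹ • h) - F v)
  have ha : Tendsto a atTop (𝓝 (D h)) := by
    refine hF.lim h ?_
    simpa using tendsto_pow_atTop_atTop_of_one_lt (one_lt_two (α := ℝ))
  have hstep : ∀ m, dist (a m) (a (m + 1)) ≤ G * ‖h‖ ^ 2 / 2 / 2 / 2 ^ m := fun m => by
    set c : ℝ := ((2 : ℝ) ^ (m + 1))⁻¹
    have hc : ‖c • h‖ = c * ‖h‖ := norm_smul_of_nonneg (by positivity) h
    have hc1 : c ≤ 1 := inv_le_one_of_one_le₀ (one_le_pow₀ one_le_two)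
    have hadd : ((2 : ℝ) ^ m)⁻¹ • h = c • h + c • h := by
      rw [← add_smul]; congr 1; simp only [c, pow_succ, mul_inv]; ring
    have hsub : a m - a (m + 1) =
        (2 : ℝ) ^ m • (F (v + c • h + c • h) - (2 : ℝ) • F (v + c • h) + F v) := by
      change (2 : ℝ) ^ m • (F (v + ((2 : ℝ) ^ m)⁻¹ • h) - F v) -
        (2 : ℝ) ^ (m + 1) • (F (v + c • h) - F v) = _
      rw [hadd, pow_succ, ← add_assoc]
      module
    rw [dist_eq_norm, hsub, norm_smul_of_nonneg (by positivity)]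
    calc (2 : ℝ) ^ m * _ ≤ 2 ^ m * (G * (c * ‖h‖) ^ 2) := by
          rw [← hc]
          gcongr
          exact hG _ (hc ▸ mul_le_one₀ hc1 (norm_nonneg h) hh)
      _ = G * ‖h‖ ^ 2 / 2 / 2 / 2 ^ m := by simp only [c, pow_succ]; field_simp
  have hdist := dist_le_of_le_geometric_two_of_tendsto₀ hstep ha
  have hnonneg : 0 ≤ G * ‖h‖ ^ 2 := (norm_nonneg _).trans (hG h hh)
  simp only [a, pow_zero, inv_one, one_smul, dist_eq_norm] at hdist
  linarith

lemma tendsto_of_tendstoUniformlyOn_of_quadratic_remainder {ι : Type*} {l : Filter ι}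
    {f : ι → E → W} {D : ι → E →L[ℝ] W} {f₀ : E → W} {D₀ : E →L[ℝ] W} {G : ℝ}
    (hf : TendstoUniformlyOn f f₀ l (Metric.closedBall 0 1))
    (hD : ∀ k, ∀ h, ‖h‖ ≤ 1 → ‖f k h - f k 0 - D k h‖ ≤ G * ‖h‖ ^ 2)
    (hD₀ : ∀ h, ‖h‖ ≤ 1 → ‖f₀ h - f₀ 0 - D₀ h‖ ≤ G * ‖h‖ ^ 2) :
    Tendsto D l (𝓝 D₀) := by
  refine Metric.tendsto_nhds.2 fun ε hε => ?_
  set η : ℝ := min 1 (ε / (8 * (|G| + 1)))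
  have hη : 0 < η := by positivity
  have hη1 : η ≤ 1 := min_le_left _ _
  have hGη : G * η ≤ ε / 8 := by
    have hle : η ≤ ε / (8 * (|G| + 1)) := min_le_right _ _
    rw [le_div_iff₀ (by positivity)] at hle
    nlinarith [le_abs_self G]
  filter_upwards [Metric.tendstoUniformlyOn_iff.1 hf (η * (ε / 8)) (by positivity)] with k hk
  have hclose : ∀ h, ‖h‖ ≤ 1 → ‖f₀ h - f k h‖ ≤ η * (ε / 8) := fun h hh => by
    simpa [dist_eq_norm] using (hk h (by simpa using hh)).le
  rw [dist_eq_norm]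
  refine (ContinuousLinearMap.opNorm_le_of_unit_norm (C := ε / 2) (by positivity)
    fun h hh => ?_).trans_lt (half_lt_self hε)
  have hn : ‖η • h‖ = η := by rw [norm_smul_of_nonneg hη.le, hh, mul_one]
  have hle : ‖η • h‖ ≤ 1 := hn.le.trans hη1
  have hsplit : η • (D k - D₀) h = (f₀ (η • h) - f₀ 0 - D₀ (η • h)) -
      (f k (η • h) - f k 0 - D k (η • h)) - (f₀ (η • h) - f k (η • h)) + (f₀ 0 - f k 0) := by
    simp only [sub_apply, map_smul]
    module
  refine le_of_mul_le_mul_left ?_ hη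
  calc η * ‖(D k - D₀) h‖ = ‖η • (D k - D₀) h‖ := (norm_smul_of_nonneg hη.le _).symm
    _ ≤ G * η ^ 2 + G * η ^ 2 + η * (ε / 8) + η * (ε / 8) := by
        rw [hsplit]
        refine (norm_add_le _ _).trans (add_le_add ((norm_sub_le _ _).trans
          (add_le_add ((norm_sub_le _ _).trans (add_le_add ?_ ?_)) (hclose _ hle)))
          (hclose 0 (by simp)))
        · exact (hD₀ _ hle).trans_eq (by rw [hn])
        · exact (hD k _ hle).trans_eq (by rw [hn])
    _ ≤ η * (ε / 2) := by nlinarith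

variable [FiniteDimensional ℝ W]

lemma exists_tendsto_rightInverse {ι : Type*} {l : Filter ι} {D : ι → E →L[ℝ] W} {D₀ : E →L[ℝ] W}
    (hD : Tendsto D l (𝓝 D₀)) (hsurj : Function.Surjective D₀) :
    ∃ (R : ι → W →L[ℝ] E) (R₀ : W →L[ℝ] E),
      Tendsto R l (𝓝 R₀) ∧ ∀ᶠ k in l, ∀ z, D k (R k z) = z := by
  have := FiniteDimensional.complete ℝ W
  obtain ⟨g, hg⟩ := (D₀ : E →ₗ[ℝ] W).exists_rightInverse_of_surjective
    (LinearMap.range_eq_top.2 hsurj)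
  set R₀ : W →L[ℝ] E := LinearMap.toContinuousLinearMap g
  have hDR₀ : D₀.comp R₀ = 1 := ContinuousLinearMap.ext fun z => LinearMap.congr_fun hg z
  have hDR : Tendsto (fun k => (D k).comp R₀) l (𝓝 1) :=
    hDR₀ ▸ ((show Continuous fun A : E →L[ℝ] W => A.comp R₀ by fun_prop).tendsto D₀).comp hD
  have hinv : Tendsto (fun k => Ring.inverse ((D k).comp R₀)) l (𝓝 1) := by
    have := (NormedRing.inverse_continuousAt (1 : (W →L[ℝ] W)ˣ)).tendsto
    rw [Units.val_one, Ring.inverse_one] at this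
    exact this.comp hDR
  refine ⟨fun k => R₀.comp (Ring.inverse ((D k).comp R₀)), R₀.comp 1,
    ((show Continuous fun A : W →L[ℝ] W => R₀.comp A by fun_prop).tendsto 1).comp hinv, ?_⟩
  filter_upwards [hDR.eventually (Units.isOpen.mem_nhds isUnit_one)] with k hk
  exact DFunLike.congr_fun (Ring.mul_inverse_cancel _ hk)

/-- Lagrange multipliers: up to a vanishing error, `l k` factors through the finite-dimensional
target of `D k`. -/
theorem exists_subseq_tendsto_of_tendsto_norm_restrict_ker {D : ℕ → E →L[ℝ] W} {D₀ : E →L[ℝ] W}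
    (hD : Tendsto D atTop (𝓝 D₀)) (hsurj : Function.Surjective D₀)
    {V : Type*} [NormedAddCommGroup V] [NormedSpace ℝ V] [FiniteDimensional ℝ V]
    {l : ℕ → E →L[ℝ] V} {C : ℝ} (hl : ∀ k, ‖l k‖ ≤ C)
    (hker : Tendsto (fun k => ‖(l k).comp (D k).ker.subtypeL‖) atTop (𝓝 0)) :
    ∃ (ψ : ℕ → ℕ) (l₀ : E →L[ℝ] V), StrictMono ψ ∧ Tendsto (fun k => l (ψ k)) atTop (𝓝 l₀) := by
  obtain ⟨R, R₀, hR, hDR⟩ := exists_tendsto_rightInverse hD hsurj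
  set P : ℕ → E →L[ℝ] E := fun k => .id ℝ E - (R k).comp (D k)
  have hP : Tendsto P atTop (𝓝 (.id ℝ E - R₀.comp D₀)) := .const_sub _ <|
    ((show Continuous fun q : (W →L[ℝ] E) × (E →L[ℝ] W) => q.1.comp q.2 by fun_prop).tendsto
      (R₀, D₀)).comp (hR.prodMk_nhds hD)
  have hlP : Tendsto (fun k => (l k).comp (P k)) atTop (𝓝 0) := by
    refine squeeze_zero_norm' ?_ (by simpa using hker.mul hP.norm)
    filter_upwards [hDR] with k hk
    refine ContinuousLinearMap.opNorm_le_bound _ (by positivity) fun h => ?_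
    have hmem : P k h ∈ (D k).ker := by simp [P, hk]
    calc ‖l k (P k h)‖ ≤ ‖(l k).comp (D k).ker.subtypeL‖ * ‖P k h‖ :=
          ((l k).comp (D k).ker.subtypeL).le_opNorm ⟨P k h, hmem⟩
      _ ≤ ‖(l k).comp (D k).ker.subtypeL‖ * ‖P k‖ * ‖h‖ := by
          rw [mul_assoc]
          gcongr
          exact (P k).le_opNorm h
  obtain ⟨B, hB⟩ := hR.norm.isBoundedUnder_le.eventually_le
  have hbdd : ∀ᶠ k in atTop, (l k).comp (R k) ∈ Metric.closedBall (0 : W →L[ℝ] V) (C * B) := by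
    filter_upwards [hB] with k hk
    rw [mem_closedBall_zero_iff]
    exact (ContinuousLinearMap.opNorm_comp_le _ _).trans
      (mul_le_mul (hl k) hk (norm_nonneg _) ((norm_nonneg _).trans (hl k)))
  have := FiniteDimensional.proper ℝ (W →L[ℝ] V)
  obtain ⟨m, -, ψ, hψ, hm⟩ :=
    tendsto_subseq_of_frequently_bounded Metric.isBounded_closedBall hbdd.frequently
  have hlRD := ((show Continuous fun q : (W →L[ℝ] V) × (E →L[ℝ] W) => q.1.comp q.2 by
    fun_prop).tendsto (m, D₀)).comp (hm.prodMk_nhds (hD.comp hψ.tendsto_atTop))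
  refine ⟨ψ, m.comp D₀, hψ, ?_⟩
  refine (zero_add (m.comp D₀) ▸ (hlP.comp hψ.tendsto_atTop).add hlRD).congr fun k => ?_
  ext h
  simp [P]

end FiniteDimensionalTarget

section PalaisSmale

variable {E W G : Type*} [NormedAddCommGroup E] [NormedSpace ℝ E] [UniformConvexSpace E]
  [CompleteSpace E] [NormedAddCommGroup W] [NormedSpace ℝ W] [FiniteDimensional ℝ W]
  [NormedAddCommGroup G] [NormedSpace ℝ G]

/-- The Palais–Smale condition on a regular fibre of `F`, for an abstract cost differential `l`.
Continuity of `F` with respect to the seminorm `‖T ·‖` of a compact operator `T` plays the role of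
weak continuity. -/
theorem exists_subseq_tendsto_of_tendsto_norm_restrict_ker_fderiv {T : E →L[ℝ] G}
    (hT : IsCompactOperator T) {F : E → W} {D : E → E →L[ℝ] W} (hD : ∀ v, HasFDerivAt F (D v) v)
    (hF_second : ∀ C, ∃ K : ℝ, ∀ v h : E, ‖v‖ ≤ C → ‖h‖ ≤ 1 →
      ‖F (v + h + h) - (2 : ℝ) • F (v + h) + F v‖ ≤ K * ‖h‖ ^ 2)
    (hF_unif : ∀ C, ∀ ε > 0, ∃ δ > 0, ∀ v w : E, ‖v‖ ≤ C → ‖w‖ ≤ C → ‖T v - T w‖ ≤ δ →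
      ‖F v - F w‖ < ε)
    {l : E → E →L[ℝ] ℝ} (hl_bdd : ∀ C, ∃ K, ∀ v, ‖v‖ ≤ C → ‖l v‖ ≤ K)
    (hl_inj : ∀ C, ∀ ε > 0, ∃ δ > 0, ∀ v w : E, ‖v‖ ≤ C → ‖w‖ ≤ C → ‖l v - l w‖ ≤ δ →
      ‖v - w‖ < ε)
    {y : W} (hreg : ∀ v, F v = y → Function.Surjective (D v)) {u : ℕ → E} (hu : ∀ k, F (u k) = y)
    {C : ℝ} (hC : ∀ k, ‖u k‖ ≤ C)
    (hker : Tendsto (fun k => ‖(l (u k)).comp (D (u k)).ker.subtypeL‖) atTop (𝓝 0)) :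
    ∃ (φ : ℕ → ℕ) (w : E), StrictMono φ ∧ Tendsto (fun k => u (φ k)) atTop (𝓝 w) := by
  obtain ⟨φ, w, hφ, hw, hTw⟩ := exists_subseq_tendsto_apply_of_isCompactOperator hT hC
  have hunif : TendstoUniformlyOn (fun k h => F (u (φ k) + h)) (fun h => F (w + h)) atTop
      (Metric.closedBall 0 1) := Metric.tendstoUniformlyOn_iff.2 fun ε hε => by
    obtain ⟨δ, hδ, hFδ⟩ := hF_unif (C + 1) ε hε
    filter_upwards [hTw.eventually (Metric.closedBall_mem_nhds _ hδ)] with k hk h hh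
    rw [mem_closedBall_zero_iff] at hh
    rw [dist_comm, dist_eq_norm]
    refine hFδ _ _ (norm_add_le_of_le (hC _) hh) (norm_add_le_of_le hw hh) ?_
    simpa [map_add, dist_eq_norm] using hk
  have hFw : F w = y := by
    have := hunif.tendsto_at (Metric.mem_closedBall_self zero_le_one)
    simp only [add_zero, hu] at this
    exact tendsto_nhds_unique this tendsto_const_nhds
  obtain ⟨K, hK⟩ := hF_second C
  have hrem : ∀ v, ‖v‖ ≤ C → ∀ h, ‖h‖ ≤ 1 → ‖F (v + h) - F (v + 0) - D v h‖ ≤ K * ‖h‖ ^ 2 :=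
    fun v hv h hh => by
      rw [add_zero]
      exact norm_sub_sub_fderiv_le_of_second_difference_le (hD v) (fun h => hK v h hv) hh
  have hDw : Tendsto (fun k => D (u (φ k))) atTop (𝓝 (D w)) :=
    tendsto_of_tendstoUniformlyOn_of_quadratic_remainder hunif (fun k => hrem _ (hC _)) (hrem w hw)
  obtain ⟨A, hA⟩ := hl_bdd C
  obtain ⟨ψ, l₀, hψ, hl₀⟩ := exists_subseq_tendsto_of_tendsto_norm_restrict_ker hDw (hreg w hFw)
    (fun k => hA _ (hC (φ k))) (hker.comp hφ.tendsto_atTop)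
  have hcauchy : CauchySeq fun k => u (φ (ψ k)) := Metric.cauchySeq_iff.2 fun ε hε => by
    obtain ⟨δ, hδ, hlδ⟩ := hl_inj C ε hε
    obtain ⟨N, hN⟩ := Metric.cauchySeq_iff.1 hl₀.cauchySeq δ hδ
    refine ⟨N, fun i hi j hj => ?_⟩
    rw [dist_eq_norm]
    exact hlδ _ _ (hC _) (hC _) (by simpa [dist_eq_norm] using (hN i hi j hj).le)
  obtain ⟨z, hz⟩ := cauchySeq_tendsto_of_complete hcauchy
  exact ⟨φ ∘ ψ, z, hφ.comp hψ, hz⟩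

end PalaisSmale

section Gronwall

theorem absolutelyContinuousOnInterval_comp_of_lipschitzOnWith {X Y : Type*}
    [PseudoMetricSpace X] [PseudoMetricSpace Y] {f : ℝ → X} {g : X → Y} {a b : ℝ} {K : NNReal}
    {s : Set X} (hg : LipschitzOnWith K g s) (hf : AbsolutelyContinuousOnInterval f a b)
    (hfs : MapsTo f (uIcc a b) s) : AbsolutelyContinuousOnInterval (g ∘ f) a b := by
  have hlim := Tendsto.const_mul (K : ℝ) hf
  rw [mul_zero] at hlim
  refine squeeze_zero' (.of_forall fun E => Finset.sum_nonneg fun i _ => dist_nonneg) ?_ hlim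
  filter_upwards [mem_inf_of_right (mem_principal_self _)] with E hE
  rw [Finset.mul_sum]
  exact Finset.sum_le_sum fun i hi =>
    hg.dist_le_mul _ (hfs (hE.1 i hi).1) _ (hfs (hE.1 i hi).2)

theorem absolutelyContinuousOnInterval_exp {f : ℝ → ℝ} {a b : ℝ}
    (hf : AbsolutelyContinuousOnInterval f a b) :
    AbsolutelyContinuousOnInterval (fun t => Real.exp (f t)) a b := by
  obtain ⟨K, hK⟩ := LocallyLipschitzOn.exists_lipschitzOnWith_of_compact
    (isCompact_uIcc.image_of_continuousOn hf.continuousOn)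
    (Real.contDiff_exp.locallyLipschitz.locallyLipschitzOn)
  exact absolutelyContinuousOnInterval_comp_of_lipschitzOnWith (g := Real.exp) hK hf
    (mapsTo_image f _)

theorem le_of_ae_hasDerivAt_nonpos {f f' : ℝ → ℝ} {a b : ℝ} (hab : a ≤ b)
    (hf : AbsolutelyContinuousOnInterval f a b)
    (hf' : ∀ᵐ t, t ∈ uIcc a b → HasDerivAt f (f' t) t ∧ f' t ≤ 0) : f b ≤ f a := by
  rw [← sub_nonpos, ← hf.integral_deriv_eq_sub, ← neg_nonneg, ← intervalIntegral.integral_neg]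
  refine intervalIntegral.integral_nonneg_of_ae_restrict hab ?_
  rw [EventuallyLE, ae_restrict_iff' measurableSet_Icc]
  filter_upwards [hf'] with t ht hmem
  rw [← uIcc_of_le hab] at hmem
  simpa only [Pi.zero_apply, (ht hmem).1.deriv, neg_nonneg] using (ht hmem).2

theorem le_mul_exp_integral_of_le_add_integral_mul {φ k : ℝ → ℝ} {a b R : ℝ} (hab : a ≤ b)
    (hφ : ContinuousOn φ (Icc a b)) (hk : IntervalIntegrable k volume a b) (hk_nonneg : 0 ≤ k)
    (hle : ∀ t ∈ Icc a b, φ t ≤ R + ∫ s in a..t, k s * φ s) :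
    φ b ≤ R * Real.exp (∫ s in a..b, k s) := by
  rw [← uIcc_of_le hab] at hφ hle
  have ha : a ∈ uIcc a b := left_mem_uIcc
  have hkφ := hk.mul_continuousOn hφ
  have hψ := (contDiffOn_const (c := R)).absolutelyContinuousOnInterval.fun_add
    (hkφ.absolutelyContinuousOnInterval_intervalIntegral ha)
  have hexp := absolutelyContinuousOnInterval_exp
    (hk.absolutelyContinuousOnInterval_intervalIntegral ha).fun_neg
  set g' : ℝ → ℝ := fun t =>
    k t * Real.exp (-∫ s in a..t, k s) * (φ t - (R + ∫ s in a..t, k s * φ s))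
  have hderiv : ∀ᵐ t, t ∈ uIcc a b → HasDerivAt (fun t => (R + ∫ s in a..t, k s * φ s) *
      Real.exp (-∫ s in a..t, k s)) (g' t) t ∧ g' t ≤ 0 := by
    filter_upwards [hk.ae_hasDerivAt_integral, hkφ.ae_hasDerivAt_integral] with t hk' hkφ' ht
    refine ⟨(((hkφ' ht a ha).const_add R).mul (hk' ht a ha).neg.exp).congr_deriv
      (by simp only [g', Pi.neg_apply]; ring), ?_⟩
    exact mul_nonpos_of_nonneg_of_nonpos (mul_nonneg (hk_nonneg t) (Real.exp_pos _).le)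
      (sub_nonpos.2 (hle t ht))
  have hdecr := le_of_ae_hasDerivAt_nonpos hab (hψ.fun_mul hexp) hderiv
  simp only [intervalIntegral.integral_same, add_zero, neg_zero, Real.exp_zero, mul_one,
    Real.exp_neg, ← div_eq_mul_inv, div_le_iff₀ (Real.exp_pos _)] at hdecr
  exact (hle b right_mem_uIcc).trans hdecr

end Gronwall

section IntegrationByParts

variable {a b : ℝ}

theorem dist_le_sub_of_forall_dist_le_of_sub_le {X : Type*} [PseudoMetricSpace X] {q : ℝ → X}
    {β : ℝ → ℝ} {η : ℝ} (hab : a ≤ b) (hη : 0 < η)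
    (hq : ∀ s ∈ Icc a b, ∀ t ∈ Icc a b, s ≤ t → t - s ≤ η → dist (q s) (q t) ≤ β t - β s) :
    dist (q a) (q b) ≤ β b - β a := by
  obtain ⟨N, hN⟩ := exists_nat_gt ((b - a) / η)
  have hN_pos : (0 : ℝ) < N := (div_nonneg (sub_nonneg.2 hab) hη.le).trans_lt hN
  set τ : ℕ → ℝ := fun i => a + i * ((b - a) / N)
  have hτ_zero : τ 0 = a := by simp [τ]
  have hτN : τ N = b := by simp only [τ]; field_simp; ring
  have hτ_succ (i : ℕ) : τ (i + 1) - τ i = (b - a) / N := by simp only [τ]; push_cast; ring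
  have hτ_mono : Monotone τ := monotone_nat_of_le_succ fun i => by
    rw [← sub_nonneg, hτ_succ]
    exact div_nonneg (sub_nonneg.2 hab) hN_pos.le
  have hτ_mem {i : ℕ} (hi : i ≤ N) : τ i ∈ Icc a b :=
    ⟨hτ_zero ▸ hτ_mono i.zero_le, hτN ▸ hτ_mono hi⟩
  have hsum : dist (q (τ 0)) (q (τ N)) ≤ ∑ i ∈ Finset.range N, (β (τ (i + 1)) - β (τ i)) :=
    dist_le_range_sum_of_dist_le (f := q ∘ τ) N fun {i} hi => by
      refine hq _ (hτ_mem hi.le) _ (hτ_mem hi) (hτ_mono i.le_succ) ?_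
      rw [hτ_succ, div_le_comm₀ hN_pos hη]
      exact hN.le
  rwa [Finset.sum_range_sub (fun i => β (τ i)), hτN, hτ_zero] at hsum

theorem intervalIntegrable_of_mem_Icc {E : Type*} [NormedAddCommGroup E] {f : ℝ → E} {s t : ℝ}
    (hf : IntervalIntegrable f volume a b) (hs : s ∈ Icc a b) (ht : t ∈ Icc a b) :
    IntervalIntegrable f volume s t :=
  hf.mono_set ((uIcc_subset_Icc hs ht).trans Icc_subset_uIcc)

theorem integral_eq_integral_add_integral {E : Type*} [NormedAddCommGroup E] [NormedSpace ℝ E]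
    {f : ℝ → E} {s t : ℝ} (hf : IntervalIntegrable f volume a b) (hs : s ∈ Icc a b)
    (ht : t ∈ Icc a b) : ∫ r in a..t, f r = (∫ r in a..s, f r) + ∫ r in s..t, f r :=
  (intervalIntegral.integral_add_adjacent_intervals
    (intervalIntegrable_of_mem_Icc hf (left_mem_Icc.2 (hs.1.trans hs.2)) hs)
    (intervalIntegrable_of_mem_Icc hf hs ht)).symm

variable {V E : Type*} [NormedAddCommGroup V] [NormedSpace ℝ V] [NormedAddCommGroup E]
  [NormedSpace ℝ E]

theorem integral_congr_ae_of_mem_Icc {f g : ℝ → E} {t : ℝ}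
    (hfg : f =ᵐ[volume.restrict (Icc a b)] g) (ht : t ∈ Icc a b) :
    ∫ s in a..t, f s = ∫ s in a..t, g s := by
  refine intervalIntegral.integral_congr_ae_restrict (ae_mono ?_ hfg)
  rw [uIoc_of_le ht.1]
  exact Measure.restrict_mono_set volume
    (Ioc_subset_Icc_self.trans (Icc_subset_Icc_right ht.2))

theorem intervalIntegrable_clm_apply {α : ℝ → V →L[ℝ] E} {v : ℝ → V}
    (hα : ContinuousOn α (uIcc a b)) (hv : IntervalIntegrable v volume a b) :
    IntervalIntegrable (fun t => α t (v t)) volume a b := by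
  rw [intervalIntegrable_iff] at hv ⊢
  obtain ⟨C, hC⟩ := isCompact_uIcc.exists_bound_of_continuousOn hα
  refine (ContinuousLinearMap.id ℝ (V →L[ℝ] E)).integrable_of_bilin_of_bdd_left C
    ((hα.mono uIoc_subset_uIcc).aestronglyMeasurable measurableSet_uIoc) ?_ hv
  filter_upwards [ae_restrict_mem measurableSet_uIoc] with t ht using hC t (uIoc_subset_uIcc ht)

variable [CompleteSpace V] [CompleteSpace E]

theorem norm_integral_clm_apply_sub_le_of_norm_sub_le {α : ℝ → V →L[ℝ] E} {v : ℝ → V} {ω : ℝ}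
    (hab : a ≤ b) (hα : ContinuousOn α (Icc a b)) (hv : IntervalIntegrable v volume a b)
    (hω : ∀ t ∈ Icc a b, ‖α t - α b‖ ≤ ω) :
    ‖(∫ t in a..b, α t (v t)) - α b (∫ t in a..b, v t)‖ ≤ ω * ∫ t in a..b, ‖v t‖ := by
  rw [← ContinuousLinearMap.intervalIntegral_comp_comm _ hv, ← intervalIntegral.integral_sub
    (intervalIntegrable_clm_apply (by rwa [uIcc_of_le hab]) hv)
    (intervalIntegrable_clm_apply continuousOn_const hv), ← intervalIntegral.integral_const_mul]
  refine intervalIntegral.norm_integral_le_of_norm_le hab (.of_forall fun t ht => ?_)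
    (hv.norm.const_mul ω)
  exact (α t - α b).le_of_opNorm_le (hω t (Ioc_subset_Icc_self ht)) (v t)

-- Integration by parts: `∫ α v - α(b) ∫ v` equals `-∫ dα (∫ v)`, and only the primitive of `v`
-- enters the last integral.
theorem norm_integral_clm_apply_sub_le {α : ℝ → V →L[ℝ] E} {m : ℝ → ℝ} {v : ℝ → V} {δ : ℝ}
    (hab : a ≤ b) (hα : ContinuousOn α (Icc a b)) (hm : IntervalIntegrable m volume a b)
    (hαm : ∀ s ∈ Icc a b, ∀ t ∈ Icc a b, s ≤ t → ‖α t - α s‖ ≤ ∫ r in s..t, m r)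
    (hv : IntervalIntegrable v volume a b) (hδ : ∀ t ∈ Icc a b, ‖∫ r in a..t, v r‖ ≤ δ) :
    ‖(∫ t in a..b, α t (v t)) - α b (∫ t in a..b, v t)‖ ≤ δ * ∫ t in a..b, m t := by
  set q : ℝ → E := fun t => (∫ r in a..t, α r (v r)) - α t (∫ r in a..t, v r)
  set β : ℝ → ℝ → ℝ := fun ω t => ω * (∫ r in a..t, ‖v r‖) + δ * ∫ r in a..t, m r
  have hαv : IntervalIntegrable (fun t => α t (v t)) volume a b :=
    intervalIntegrable_clm_apply (by rwa [uIcc_of_le hab]) hv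
  have hlocal : ∀ ω > 0, ∃ η > 0, ∀ s ∈ Icc a b, ∀ t ∈ Icc a b, s ≤ t → t - s ≤ η →
      dist (q s) (q t) ≤ β ω t - β ω s := fun ω hω => by
    obtain ⟨η, hη, hαη⟩ := Metric.uniformContinuousOn_iff_le.1
      (isCompact_Icc.uniformContinuousOn_of_continuous hα) ω hω
    refine ⟨η, hη, fun s hs t ht hst hts => ?_⟩
    have hosc := norm_integral_clm_apply_sub_le_of_norm_sub_le hst
      (hα.mono (Icc_subset_Icc hs.1 ht.2)) (intervalIntegrable_of_mem_Icc hv hs ht)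
      fun r hr => dist_eq_norm (α r) _ ▸ hαη r ⟨hs.1.trans hr.1, hr.2.trans ht.2⟩ t ht (by
        rw [dist_comm, Real.dist_eq, abs_of_nonneg] <;> linarith [hr.1, hr.2])
    have hprim : ‖(α t - α s) (∫ r in a..s, v r)‖ ≤ (∫ r in s..t, m r) * δ :=
      (α t - α s).le_of_opNorm_le_of_le (hαm s hs t ht hst) (hδ s hs)
    have hq : q t - q s = ((∫ r in s..t, α r (v r)) - α t (∫ r in s..t, v r)) -
        (α t - α s) (∫ r in a..s, v r) := by
      simp only [q, integral_eq_integral_add_integral hαv hs ht,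
        integral_eq_integral_add_integral hv hs ht, map_add, sub_apply]
      abel
    rw [dist_comm, dist_eq_norm, hq]
    simp only [β, integral_eq_integral_add_integral hv.norm hs ht,
      integral_eq_integral_add_integral hm hs ht]
    linarith [norm_sub_le_of_le hosc hprim]
  refine le_of_forall_pos_le_add fun ε hε => ?_
  have hN : 0 ≤ ∫ t in a..b, ‖v t‖ := intervalIntegral.integral_nonneg hab fun _ _ => norm_nonneg _
  obtain ⟨η, hη, hq⟩ := hlocal (ε / ((∫ t in a..b, ‖v t‖) + 1)) (by positivity)
  have hglobal := dist_le_sub_of_forall_dist_le_of_sub_le hab hη hq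
  have hsmall : ε / ((∫ t in a..b, ‖v t‖) + 1) * (∫ t in a..b, ‖v t‖) ≤ ε := by
    rw [div_mul_comm]
    exact mul_le_of_le_one_left hε.le ((div_le_one (by positivity)).2 (by linarith))
  simp only [q, β, dist_eq_norm, intervalIntegral.integral_same, map_zero, sub_zero, mul_zero,
    add_zero, zero_sub, norm_neg] at hglobal
  linarith

end IntegrationByParts

section SecondOrderBounded

variable {E G H ι : Type*} [NormedAddCommGroup E] [NormedSpace ℝ E] [NormedAddCommGroup G]
  [NormedSpace ℝ G] [NormedAddCommGroup H] [NormedSpace ℝ H]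

/-- `f` is bounded together with its first and second derivatives by `L`, where the bounds on the
derivatives are stated as bounds on first and second differences. -/
structure SecondOrderBounded (f : E → G) (L : ℝ) : Prop where
  norm_le : ∀ x, ‖f x‖ ≤ L
  norm_sub_le : ∀ x y, ‖f x - f y‖ ≤ L * ‖x - y‖
  norm_second_difference_le : ∀ x y z, ‖f z - (2 : ℝ) • f y + f x‖ ≤
    L * (‖z - (2 : ℝ) • y + x‖ + ‖z - y‖ ^ 2 + ‖y - x‖ ^ 2)

theorem norm_sub_sub_fderiv_le_of_norm_fderiv_fderiv_le {f : E → G} (hf : ContDiff ℝ 2 f) {M : ℝ}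
    (hM : ∀ x, ‖fderiv ℝ (fderiv ℝ f) x‖ ≤ M) (x y : E) :
    ‖f y - f x - fderiv ℝ f x (y - x)‖ ≤ M * ‖y - x‖ ^ 2 := by
  have hM_nonneg : 0 ≤ M := (norm_nonneg (fderiv ℝ (fderiv ℝ f) x)).trans (hM x)
  rw [pow_two, ← mul_assoc]
  refine (convex_segment x y).norm_image_sub_le_of_norm_fderiv_le'
    (fun z _ => hf.differentiable (by simp) z) (fun z hz => ?_)
    (left_mem_segment ℝ x y) (right_mem_segment ℝ x y)
  have hf' : Differentiable ℝ (fderiv ℝ f) :=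
    (hf.fderiv_right (m := 1) (by norm_num)).differentiable (by simp)
  refine (convex_univ.norm_image_sub_le_of_norm_fderiv_le (fun w _ => hf' w) (fun w _ => hM w)
    (mem_univ x) (mem_univ z)).trans (mul_le_mul_of_nonneg_left ?_ hM_nonneg)
  rw [← dist_eq_norm, ← dist_eq_norm, dist_comm z x, dist_comm y x]
  linarith [dist_add_dist_of_mem_segment hz, dist_nonneg (x := z) (y := y)]

namespace SecondOrderBounded

theorem of_contDiff {f : E → G} (hf : ContDiff ℝ 2 f) {M₀ M₁ M₂ : ℝ} (h₀ : ∀ x, ‖f x‖ ≤ M₀)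
    (h₁ : ∀ x, ‖fderiv ℝ f x‖ ≤ M₁) (h₂ : ∀ x, ‖fderiv ℝ (fderiv ℝ f) x‖ ≤ M₂) :
    SecondOrderBounded f (M₀ + M₁ + M₂) := by
  have hM₀ : 0 ≤ M₀ := (norm_nonneg _).trans (h₀ 0)
  have hM₁ : 0 ≤ M₁ := (norm_nonneg _).trans (h₁ 0)
  have hM₂ : 0 ≤ M₂ := (norm_nonneg (fderiv ℝ (fderiv ℝ f) 0)).trans (h₂ 0)
  refine ⟨fun x => by linarith [h₀ x], fun x y => ?_, fun x y z => ?_⟩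
  · refine (convex_univ.norm_image_sub_le_of_norm_fderiv_le
      (fun w _ => hf.differentiable (by simp) w) (fun w _ => h₁ w) (mem_univ y)
      (mem_univ x)).trans ?_
    gcongr
    linarith
  · have hsplit : f z - (2 : ℝ) • f y + f x = fderiv ℝ f y (z - (2 : ℝ) • y + x) +
        (f z - f y - fderiv ℝ f y (z - y)) + (f x - f y - fderiv ℝ f y (x - y)) := by
      simp only [map_add, map_sub, map_smul]
      module
    rw [hsplit]
    have hderiv := (fderiv ℝ f y).le_of_opNorm_le (h₁ y) (z - (2 : ℝ) • y + x)
    have hz := norm_sub_sub_fderiv_le_of_norm_fderiv_fderiv_le hf h₂ y z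
    have hx := norm_sub_sub_fderiv_le_of_norm_fderiv_fderiv_le hf h₂ y x
    rw [norm_sub_rev x y] at hx
    refine (norm_add_le_of_le (norm_add_le_of_le hderiv hz) hx).trans ?_
    rw [mul_add, mul_add]
    gcongr <;> linarith

variable {f g : E → G} {L M : ℝ}

theorem nonneg (hf : SecondOrderBounded f L) : 0 ≤ L :=
  (norm_nonneg _).trans (hf.norm_le 0)

theorem continuous (hf : SecondOrderBounded f L) : Continuous f :=
  (LipschitzWith.of_dist_le_mul (K := ⟨L, hf.nonneg⟩) fun x y => by
    rw [dist_eq_norm, dist_eq_norm]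
    exact hf.norm_sub_le x y).continuous

theorem add (hf : SecondOrderBounded f L) (hg : SecondOrderBounded g M) :
    SecondOrderBounded (fun x => f x + g x) (L + M) where
  norm_le x := norm_add_le_of_le (hf.norm_le x) (hg.norm_le x)
  norm_sub_le x y := by
    rw [add_sub_add_comm, add_mul]
    exact norm_add_le_of_le (hf.norm_sub_le x y) (hg.norm_sub_le x y)
  norm_second_difference_le x y z := by
    rw [smul_add, add_sub_add_comm, add_add_add_comm, add_mul]
    exact norm_add_le_of_le (hf.norm_second_difference_le x y z)
      (hg.norm_second_difference_le x y z)

theorem sum {s : Finset ι} {f : ι → E → G} {L : ι → ℝ}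
    (hf : ∀ i ∈ s, SecondOrderBounded (f i) (L i)) :
    SecondOrderBounded (fun x => ∑ i ∈ s, f i x) (∑ i ∈ s, L i) := by
  classical
  induction s using Finset.induction_on with
  | empty => constructor <;> simp
  | insert i s hi ih =>
    simp only [Finset.sum_insert hi]
    exact (hf i (s.mem_insert_self i)).add (ih fun j hj => hf j (Finset.mem_insert_of_mem hj))

theorem clm_comp (T : G →L[ℝ] H) (hf : SecondOrderBounded f L) :
    SecondOrderBounded (fun x => T (f x)) (‖T‖ * L) where
  norm_le x := T.le_opNorm_of_le (hf.norm_le x)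
  norm_sub_le x y := by
    rw [← map_sub, mul_assoc]
    exact T.le_opNorm_of_le (hf.norm_sub_le x y)
  norm_second_difference_le x y z := by
    rw [← map_smul, ← map_sub, ← map_add, mul_assoc]
    exact T.le_opNorm_of_le (hf.norm_second_difference_le x y z)

end SecondOrderBounded

variable [Fintype ι]

/-- The control system `γ' = X₀(γ) + ∑ uᵢ Xᵢ(γ)` written without drift, as `γ' = A(γ) (1, u)`. -/
def controlOperator (X₀ : E → E) (X : ι → E → E) (z : E) : ℝ × EuclideanSpace ℝ ι →L[ℝ] E :=
  (ContinuousLinearMap.fst ℝ ℝ _).smulRight (X₀ z) +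
    ∑ i, ((EuclideanSpace.proj i).comp (ContinuousLinearMap.snd ℝ ℝ _)).smulRight (X i z)

theorem controlOperator_apply (X₀ : E → E) (X : ι → E → E) (z : E)
    (v : ℝ × EuclideanSpace ℝ ι) :
    controlOperator X₀ X z v = v.1 • X₀ z + ∑ i, v.2 i • X i z := by
  simp [controlOperator]

theorem exists_secondOrderBounded_controlOperator {X₀ : E → E} {X : ι → E → E} {L₀ : ℝ} {L : ι → ℝ}
    (h₀ : SecondOrderBounded X₀ L₀) (hX : ∀ i, SecondOrderBounded (X i) (L i)) :
    ∃ M, SecondOrderBounded (controlOperator X₀ X) M :=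
  ⟨_, (h₀.clm_comp (ContinuousLinearMap.smulRightL ℝ _ _ (ContinuousLinearMap.fst ℝ ℝ _))).add
    (.sum fun i _ => (hX i).clm_comp (ContinuousLinearMap.smulRightL ℝ _ _
      ((EuclideanSpace.proj i).comp (ContinuousLinearMap.snd ℝ ℝ _))))⟩

end SecondOrderBounded

section ControlTrajectory

variable {E V : Type*} [NormedAddCommGroup E] [NormedAddCommGroup V] {L : ℝ} {v w h : ℝ → V}

theorem integral_norm_le_integral_norm_of_mem_Icc (hw : IntervalIntegrable w volume 0 1) {t : ℝ}
    (ht : t ∈ Icc (0 : ℝ) 1) : ∫ s in (0 : ℝ)..t, ‖w s‖ ≤ ∫ s in (0 : ℝ)..1, ‖w s‖ :=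
  intervalIntegral.integral_mono_interval le_rfl ht.1 ht.2 (.of_forall fun _ => norm_nonneg _)
    hw.norm

theorem norm_le_mul_exp_integral_norm {g : ℝ → E} {R : ℝ} (hL : 0 ≤ L)
    (hg : ContinuousOn g (Icc 0 1)) (hv : IntervalIntegrable v volume 0 1)
    (hle : ∀ t ∈ Icc (0 : ℝ) 1, ‖g t‖ ≤ R + ∫ s in (0 : ℝ)..t, L * ‖v s‖ * ‖g s‖) {t : ℝ}
    (ht : t ∈ Icc (0 : ℝ) 1) : ‖g t‖ ≤ R * Real.exp (L * ∫ s in (0 : ℝ)..1, ‖v s‖) := by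
  have h0 : (0 : ℝ) ∈ Icc (0 : ℝ) 1 := left_mem_Icc.2 zero_le_one
  have hR : 0 ≤ R := (norm_nonneg _).trans (by simpa using hle 0 h0)
  refine (le_mul_exp_integral_of_le_add_integral_mul ht.1
    (hg.norm.mono (Icc_subset_Icc_right ht.2))
    (intervalIntegrable_of_mem_Icc (hv.norm.const_mul L) h0 ht)
    (fun s => mul_nonneg hL (norm_nonneg _)) fun s hs => hle s ⟨hs.1, hs.2.trans ht.2⟩).trans
    (mul_le_mul_of_nonneg_left (Real.exp_le_exp.2 ?_) hR)
  rw [intervalIntegral.integral_const_mul]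
  exact mul_le_mul_of_nonneg_left (integral_norm_le_integral_norm_of_mem_Icc hv ht) hL

variable [NormedSpace ℝ E] [NormedSpace ℝ V]

theorem SecondOrderBounded.norm_second_difference_apply_add_sub_apply_le {A : E → V →L[ℝ] E}
    (hA : SecondOrderBounded A L) {z₀ z₁ z₂ : E} {κ : ℝ} (h₁ : ‖z₁ - z₀‖ ≤ κ)
    (h₂ : ‖z₂ - z₁‖ ≤ κ) (a b : V) :
    ‖(A z₂ - (2 : ℝ) • A z₁ + A z₀) a + (A z₂ - A z₀) b‖ ≤
      2 * L * κ ^ 2 * ‖a‖ + 2 * L * κ * ‖b‖ + L * ‖a‖ * ‖z₂ - (2 : ℝ) • z₁ + z₀‖ := by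
  have hL := hA.nonneg
  have hsecond : ‖A z₂ - (2 : ℝ) • A z₁ + A z₀‖ ≤
      L * (‖z₂ - (2 : ℝ) • z₁ + z₀‖ + κ ^ 2 + κ ^ 2) :=
    (hA.norm_second_difference_le _ _ _).trans (by gcongr)
  have hfirst : ‖A z₂ - A z₀‖ ≤ L * (κ + κ) := (hA.norm_sub_le _ _).trans <| by
    gcongr
    exact (norm_sub_le_norm_sub_add_norm_sub _ z₁ _).trans (add_le_add h₂ h₁)
  refine (norm_add_le_of_le (ContinuousLinearMap.le_of_opNorm_le _ hsecond _)
    (ContinuousLinearMap.le_of_opNorm_le _ hfirst _)).trans_eq (by ring)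

/-- Trajectory on `[0,1]`, starting at `x`, of the driftless control system `γ' = A(γ) v`. -/
def IsControlTrajectory (A : E → V →L[ℝ] E) (x : E) (v : ℝ → V) (γ : ℝ → E) : Prop :=
  ContinuousOn γ (Icc 0 1) ∧ ∀ t ∈ Icc (0 : ℝ) 1, γ t = x + ∫ s in (0 : ℝ)..t, A (γ s) (v s)

namespace IsControlTrajectory

variable {A : E → V →L[ℝ] E} {x : E} {γ σ γ₀ γ₁ γ₂ : ℝ → E}

theorem congr_ae (hγ : IsControlTrajectory A x v γ)
    (hvw : v =ᵐ[volume.restrict (Icc 0 1)] w) : IsControlTrajectory A x w γ :=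
  ⟨hγ.1, fun t ht => by
    rw [hγ.2 t ht, integral_congr_ae_of_mem_Icc (hvw.mono fun s hs => congrArg (A (γ s)) hs) ht]⟩

theorem continuousOn_comp (hγ : IsControlTrajectory A x v γ) (hA : SecondOrderBounded A L) :
    ContinuousOn (fun s => A (γ s)) (Icc 0 1) :=
  hA.continuous.comp_continuousOn hγ.1

theorem intervalIntegrable (hγ : IsControlTrajectory A x v γ) (hA : SecondOrderBounded A L)
    (hw : IntervalIntegrable w volume 0 1) {s t : ℝ} (hs : s ∈ Icc (0 : ℝ) 1)
    (ht : t ∈ Icc (0 : ℝ) 1) : IntervalIntegrable (fun r => A (γ r) (w r)) volume s t := by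
  refine intervalIntegrable_of_mem_Icc (intervalIntegrable_clm_apply ?_ hw) hs ht
  rw [uIcc_of_le zero_le_one]
  exact hγ.continuousOn_comp hA

theorem norm_sub_le_integral_norm (hγ : IsControlTrajectory A x v γ) (hA : SecondOrderBounded A L)
    (hv : IntervalIntegrable v volume 0 1) {s t : ℝ} (hs : s ∈ Icc (0 : ℝ) 1)
    (ht : t ∈ Icc (0 : ℝ) 1) (hst : s ≤ t) : ‖γ t - γ s‖ ≤ L * ∫ r in s..t, ‖v r‖ := by
  have hint := hγ.intervalIntegrable hA hv (left_mem_Icc.2 zero_le_one)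
    (right_mem_Icc.2 zero_le_one)
  rw [hγ.2 t ht, hγ.2 s hs, integral_eq_integral_add_integral hint hs ht, ← add_assoc,
    add_sub_cancel_left, ← intervalIntegral.integral_const_mul]
  exact intervalIntegral.norm_integral_le_of_norm_le hst
    (.of_forall fun r _ => (A (γ r)).le_of_opNorm_le (hA.norm_le _) _)
    ((intervalIntegrable_of_mem_Icc hv hs ht).norm.const_mul L)

theorem norm_sub_le_mul_exp (hγ : IsControlTrajectory A x v γ) (hσ : IsControlTrajectory A x w σ)
    (hA : SecondOrderBounded A L) (hv : IntervalIntegrable v volume 0 1)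
    (hw : IntervalIntegrable w volume 0 1) {R : ℝ}
    (hR : ∀ t ∈ Icc (0 : ℝ) 1, ‖∫ s in (0 : ℝ)..t, A (σ s) (v s - w s)‖ ≤ R) {t : ℝ}
    (ht : t ∈ Icc (0 : ℝ) 1) : ‖γ t - σ t‖ ≤ R * Real.exp (L * ∫ s in (0 : ℝ)..1, ‖v s‖) := by
  refine norm_le_mul_exp_integral_norm (g := fun t => γ t - σ t) hA.nonneg (hγ.1.sub hσ.1) hv
    (fun s hs => ?_) ht
  have h0 : (0 : ℝ) ∈ Icc (0 : ℝ) 1 := left_mem_Icc.2 zero_le_one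
  have hsplit : γ s - σ s = (∫ r in (0 : ℝ)..s, A (σ r) (v r - w r)) +
      ∫ r in (0 : ℝ)..s, (A (γ r) - A (σ r)) (v r) := by
    simp only [map_sub, sub_apply]
    rw [hγ.2 s hs, hσ.2 s hs, add_sub_add_left_eq_sub,
      intervalIntegral.integral_sub (hσ.intervalIntegrable hA hv h0 hs)
        (hσ.intervalIntegrable hA hw h0 hs),
      intervalIntegral.integral_sub (hγ.intervalIntegrable hA hv h0 hs)
        (hσ.intervalIntegrable hA hv h0 hs)]
    abel
  rw [hsplit]
  refine norm_add_le_of_le (hR s hs) (intervalIntegral.norm_integral_le_of_norm_le hs.1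
    (.of_forall fun r _ => ((A (γ r) - A (σ r)).le_of_opNorm_le (hA.norm_sub_le _ _) _).trans_eq
      (mul_right_comm _ _ _))
    (intervalIntegrable_of_mem_Icc ((hv.norm.const_mul L).mul_continuousOn ?_) h0 hs))
  rw [uIcc_of_le zero_le_one]
  exact (hγ.1.sub hσ.1).norm

theorem norm_sub_le_of_norm_integral_sub_le [CompleteSpace E] [CompleteSpace V]
    (hγ : IsControlTrajectory A x v γ) (hσ : IsControlTrajectory A x w σ)
    (hA : SecondOrderBounded A L) (hv : IntervalIntegrable v volume 0 1)
    (hw : IntervalIntegrable w volume 0 1) {δ : ℝ}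
    (hδ : ∀ t ∈ Icc (0 : ℝ) 1, ‖∫ s in (0 : ℝ)..t, (v s - w s)‖ ≤ δ) {t : ℝ}
    (ht : t ∈ Icc (0 : ℝ) 1) :
    ‖γ t - σ t‖ ≤ δ * (L + L * (L * ∫ s in (0 : ℝ)..1, ‖w s‖)) *
      Real.exp (L * ∫ s in (0 : ℝ)..1, ‖v s‖) := by
  have h0 : (0 : ℝ) ∈ Icc (0 : ℝ) 1 := left_mem_Icc.2 zero_le_one
  have hδ_nonneg : 0 ≤ δ := (norm_nonneg _).trans (hδ 0 h0)
  refine hγ.norm_sub_le_mul_exp hσ hA hv hw (fun s hs => ?_) ht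
  have hsub : Icc 0 s ⊆ Icc (0 : ℝ) 1 := Icc_subset_Icc_right hs.2
  have hparts := norm_integral_clm_apply_sub_le (m := fun r => L * (L * ‖w r‖)) hs.1
    ((hσ.continuousOn_comp hA).mono hsub)
    ((intervalIntegrable_of_mem_Icc hw h0 hs).norm.const_mul L |>.const_mul L)
    (fun r hr q hq hrq => by
      rw [intervalIntegral.integral_const_mul, intervalIntegral.integral_const_mul]
      exact (hA.norm_sub_le _ _).trans (mul_le_mul_of_nonneg_left
        (hσ.norm_sub_le_integral_norm hA hw (hsub hr) (hsub hq) hrq) hA.nonneg))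
    (intervalIntegrable_of_mem_Icc (hv.sub hw) h0 hs) fun r hr => hδ r (hsub hr)
  have hend : ‖A (σ s) (∫ r in (0 : ℝ)..s, (v r - w r))‖ ≤ L * δ :=
    (A (σ s)).le_of_opNorm_le_of_le (hA.norm_le _) (hδ s hs)
  have hmono : L * (L * ∫ r in (0 : ℝ)..s, ‖w r‖) ≤ L * (L * ∫ r in (0 : ℝ)..1, ‖w r‖) :=
    mul_le_mul_of_nonneg_left (mul_le_mul_of_nonneg_left
      (integral_norm_le_integral_norm_of_mem_Icc hw hs) hA.nonneg) hA.nonneg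
  rw [intervalIntegral.integral_const_mul, intervalIntegral.integral_const_mul] at hparts
  have := norm_le_insert' (∫ r in (0 : ℝ)..s, A (σ r) (v r - w r))
    (A (σ s) (∫ r in (0 : ℝ)..s, (v r - w r)))
  linarith [mul_le_mul_of_nonneg_left hmono hδ_nonneg]

theorem second_difference_eq_integral (hγ₀ : IsControlTrajectory A x (fun s => v s - h s) γ₀)
    (hγ₁ : IsControlTrajectory A x v γ₁)
    (hγ₂ : IsControlTrajectory A x (fun s => v s + h s) γ₂) (hA : SecondOrderBounded A L)
    (hv : IntervalIntegrable v volume 0 1) (hh : IntervalIntegrable h volume 0 1) {t : ℝ}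
    (ht : t ∈ Icc (0 : ℝ) 1) : γ₂ t - (2 : ℝ) • γ₁ t + γ₀ t = ∫ s in (0 : ℝ)..t,
      ((A (γ₂ s) - (2 : ℝ) • A (γ₁ s) + A (γ₀ s)) (v s) + (A (γ₂ s) - A (γ₀ s)) (h s)) := by
  have h0 : (0 : ℝ) ∈ Icc (0 : ℝ) 1 := left_mem_Icc.2 zero_le_one
  have hi₀ := hγ₀.intervalIntegrable hA (hv.sub hh) h0 ht
  have hi₁ : IntervalIntegrable (fun s => (2 : ℝ) • A (γ₁ s) (v s)) volume 0 t :=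
    (hγ₁.intervalIntegrable hA hv h0 ht).smul 2
  have hi₂ := hγ₂.intervalIntegrable hA (hv.add hh) h0 ht
  rw [hγ₀.2 t ht, hγ₁.2 t ht, hγ₂.2 t ht, smul_add, ← intervalIntegral.integral_smul,
    add_sub_add_comm, add_add_add_comm, ← intervalIntegral.integral_sub hi₂ hi₁,
    ← intervalIntegral.integral_add (hi₂.sub hi₁) hi₀, two_smul, sub_add_cancel_right,
    neg_add_cancel, zero_add]
  refine intervalIntegral.integral_congr fun s _ => ?_
  simp only [map_add, map_sub, add_apply, sub_apply, smul_apply]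
  abel

theorem norm_second_difference_le (hγ₀ : IsControlTrajectory A x (fun s => v s - h s) γ₀)
    (hγ₁ : IsControlTrajectory A x v γ₁)
    (hγ₂ : IsControlTrajectory A x (fun s => v s + h s) γ₂) (hA : SecondOrderBounded A L)
    (hv : IntervalIntegrable v volume 0 1) (hh : IntervalIntegrable h volume 0 1) {κ : ℝ}
    (hκ₁ : ∀ t ∈ Icc (0 : ℝ) 1, ‖γ₁ t - γ₀ t‖ ≤ κ)
    (hκ₂ : ∀ t ∈ Icc (0 : ℝ) 1, ‖γ₂ t - γ₁ t‖ ≤ κ) {t : ℝ} (ht : t ∈ Icc (0 : ℝ) 1) :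
    ‖γ₂ t - (2 : ℝ) • γ₁ t + γ₀ t‖ ≤
      (2 * L * κ ^ 2 * (∫ s in (0 : ℝ)..1, ‖v s‖) + 2 * L * κ * ∫ s in (0 : ℝ)..1, ‖h s‖) *
        Real.exp (L * ∫ s in (0 : ℝ)..1, ‖v s‖) := by
  have h0 : (0 : ℝ) ∈ Icc (0 : ℝ) 1 := left_mem_Icc.2 zero_le_one
  let g : ℝ → E := fun s => γ₂ s - (2 : ℝ) • γ₁ s + γ₀ s
  have hg : ContinuousOn g (Icc 0 1) := (hγ₂.1.sub (hγ₁.1.const_smul 2)).add hγ₀.1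
  refine norm_le_mul_exp_integral_norm (g := g) hA.nonneg hg hv (fun s hs => ?_) ht
  have hi_v := (intervalIntegrable_of_mem_Icc hv h0 hs).norm.const_mul (2 * L * κ ^ 2)
  have hi_h := (intervalIntegrable_of_mem_Icc hh h0 hs).norm.const_mul (2 * L * κ)
  have hi_g : IntervalIntegrable (fun r => L * ‖v r‖ * ‖g r‖) volume 0 s := by
    refine intervalIntegrable_of_mem_Icc ((hv.norm.const_mul L).mul_continuousOn ?_) h0 hs
    rw [uIcc_of_le zero_le_one]
    exact hg.norm
  have hg_eq : g s = _ := hγ₀.second_difference_eq_integral hγ₁ hγ₂ hA hv hh hs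
  rw [hg_eq]
  refine (intervalIntegral.norm_integral_le_of_norm_le hs.1 (.of_forall fun r hr =>
    have hr' : r ∈ Icc (0 : ℝ) 1 := ⟨hr.1.le, hr.2.trans hs.2⟩
    hA.norm_second_difference_apply_add_sub_apply_le (hκ₁ r hr') (hκ₂ r hr') _ _)
    ((hi_v.add hi_h).add hi_g)).trans ?_
  rw [intervalIntegral.integral_add (hi_v.add hi_h) hi_g, intervalIntegral.integral_add hi_v hi_h,
    intervalIntegral.integral_const_mul, intervalIntegral.integral_const_mul]
  have hκ : 0 ≤ κ := (norm_nonneg _).trans (hκ₁ 0 h0)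
  have hL := hA.nonneg
  gcongr
  exacts [integral_norm_le_integral_norm_of_mem_Icc hv hs,
    integral_norm_le_integral_norm_of_mem_Icc hh hs]

theorem exists_norm_sub_le_mul [CompleteSpace E] [CompleteSpace V] (hA : SecondOrderBounded A L)
    (x : E) {B : ℝ} (hB : 0 ≤ B) :
    ∃ K, 0 ≤ K ∧ ∀ {v w : ℝ → V} {γ σ : ℝ → E} {δ : ℝ}, IsControlTrajectory A x v γ →
      IsControlTrajectory A x w σ → IntervalIntegrable v volume 0 1 →
      IntervalIntegrable w volume 0 1 → ∫ s in (0 : ℝ)..1, ‖v s‖ ≤ B →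
      ∫ s in (0 : ℝ)..1, ‖w s‖ ≤ B →
      (∀ t ∈ Icc (0 : ℝ) 1, ‖∫ s in (0 : ℝ)..t, (v s - w s)‖ ≤ δ) →
      ∀ t ∈ Icc (0 : ℝ) 1, ‖γ t - σ t‖ ≤ K * δ := by
  have hL := hA.nonneg
  refine ⟨(L + L * (L * B)) * Real.exp (L * B), by positivity,
    fun {v w γ σ δ} hγ hσ hv hw hvB hwB hδ t ht => ?_⟩
  have hδ_nonneg := (norm_nonneg _).trans (hδ 0 (left_mem_Icc.2 zero_le_one))
  calc ‖γ t - σ t‖ ≤ δ * (L + L * (L * ∫ s in (0 : ℝ)..1, ‖w s‖)) *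
        Real.exp (L * ∫ s in (0 : ℝ)..1, ‖v s‖) :=
        hγ.norm_sub_le_of_norm_integral_sub_le hσ hA hv hw hδ ht
    _ ≤ δ * (L + L * (L * B)) * Real.exp (L * B) := by gcongr
    _ = (L + L * (L * B)) * Real.exp (L * B) * δ := by ring

theorem exists_norm_second_difference_le [CompleteSpace E] [CompleteSpace V]
    (hA : SecondOrderBounded A L) (x : E) {B : ℝ} (hB : 0 ≤ B) :
    ∃ K, ∀ {v h : ℝ → V} {γ₀ γ₁ γ₂ : ℝ → E}, IsControlTrajectory A x (fun s => v s - h s) γ₀ →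
      IsControlTrajectory A x v γ₁ → IsControlTrajectory A x (fun s => v s + h s) γ₂ →
      IntervalIntegrable v volume 0 1 → IntervalIntegrable h volume 0 1 →
      ∫ s in (0 : ℝ)..1, ‖v s‖ ≤ B → ∫ s in (0 : ℝ)..1, ‖h s‖ ≤ B → ∀ t ∈ Icc (0 : ℝ) 1,
      ‖γ₂ t - (2 : ℝ) • γ₁ t + γ₀ t‖ ≤ K * (∫ s in (0 : ℝ)..1, ‖h s‖) ^ 2 := by
  obtain ⟨M, hM_nonneg, hM⟩ := exists_norm_sub_le_mul hA x (add_nonneg hB hB)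
  refine ⟨(2 * L * M ^ 2 * B + 2 * L * M) * Real.exp (L * B),
    fun {v h γ₀ γ₁ γ₂} hγ₀ hγ₁ hγ₂ hv hh hvB hhB t ht => ?_⟩
  have hbound : ∀ {w : ℝ → V}, IntervalIntegrable w volume 0 1 → (∀ s, ‖w s‖ ≤ ‖v s‖ + ‖h s‖) →
      ∫ s in (0 : ℝ)..1, ‖w s‖ ≤ B + B := fun hw hle => by
    refine (intervalIntegral.integral_mono zero_le_one hw.norm (hv.norm.add hh.norm) hle).trans ?_
    rw [intervalIntegral.integral_add hv.norm hh.norm]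
    exact add_le_add hvB hhB
  have hδ : ∀ t ∈ Icc (0 : ℝ) 1, ‖∫ s in (0 : ℝ)..t, h s‖ ≤ ∫ s in (0 : ℝ)..1, ‖h s‖ :=
    fun t ht => (intervalIntegral.norm_integral_le_integral_norm ht.1).trans
      (integral_norm_le_integral_norm_of_mem_Icc hh ht)
  have hvBB : ∫ s in (0 : ℝ)..1, ‖v s‖ ≤ B + B := hvB.trans (le_add_of_nonneg_left hB)
  have hκ₁ := hM hγ₁ hγ₀ hv (hv.sub hh) hvBB (hbound (hv.sub hh) fun s => norm_sub_le _ _)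
    (by simpa only [sub_sub_cancel] using hδ)
  have hκ₂ := hM hγ₂ hγ₁ (hv.add hh) hv (hbound (hv.add hh) fun s => norm_add_le _ _) hvBB
    (by simpa only [add_sub_cancel_left] using hδ)
  have hL := hA.nonneg
  refine (hγ₀.norm_second_difference_le hγ₁ hγ₂ hA hv hh hκ₁ hκ₂ ht).trans ?_
  calc _ = (2 * L * M ^ 2 * (∫ s in (0 : ℝ)..1, ‖v s‖) + 2 * L * M) *
        Real.exp (L * ∫ s in (0 : ℝ)..1, ‖v s‖) * (∫ s in (0 : ℝ)..1, ‖h s‖) ^ 2 := by ring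
    _ ≤ _ := by gcongr

end IsControlTrajectory

end ControlTrajectory

section Primitive

/-- The space `L^p([0,1], U)` of controls. -/
abbrev ControlSpace (U : Type*) [NormedAddCommGroup U] (p : ℝ) : Type _ :=
  Lp U (ENNReal.ofReal p) (volume.restrict (Icc (0 : ℝ) 1))

namespace ControlSpace

variable {U : Type*} [NormedAddCommGroup U] {p : ℝ}

theorem integral_smul [NormedSpace ℝ U] (c : ℝ) (u : ControlSpace U p) {t : ℝ}
    (ht : t ∈ Icc (0 : ℝ) 1) :
    ∫ s in (0 : ℝ)..t, (c • u : ControlSpace U p) s = c • ∫ s in (0 : ℝ)..t, u s := by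
  rw [integral_congr_ae_of_mem_Icc (Lp.coeFn_smul c u) ht]
  exact intervalIntegral.integral_smul _ _

variable [hp : Fact (1 ≤ ENNReal.ofReal p)]

theorem intervalIntegrable (u : ControlSpace U p) : IntervalIntegrable u volume 0 1 :=
  (intervalIntegrable_iff_integrableOn_Icc_of_le zero_le_one).2 ((Lp.memLp u).integrable hp.out)

theorem integral_norm_le_rpow_mul_norm (u : ControlSpace U p) {s t : ℝ}
    (hs : s ∈ Icc (0 : ℝ) 1) (ht : t ∈ Icc (0 : ℝ) 1) (hst : s ≤ t) :
    ∫ r in s..t, ‖u r‖ ≤ (t - s) ^ (1 - 1 / p) * ‖u‖ := by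
  have hp_one : 1 ≤ p := ENNReal.one_le_ofReal.1 hp.out
  have hμ : volume.restrict (Ioc s t) ≤ volume.restrict (Icc (0 : ℝ) 1) :=
    Measure.restrict_mono_set _ (Ioc_subset_Icc_self.trans (Icc_subset_Icc hs.1 ht.2))
  have hu := (Lp.memLp u).mono_measure hμ
  have hmass : volume.restrict (Ioc s t) univ ^
      (1 / (1 : ENNReal).toReal - 1 / (ENNReal.ofReal p).toReal) =
      ENNReal.ofReal ((t - s) ^ (1 - 1 / p)) := by
    rw [Measure.restrict_apply_univ, Real.volume_Ioc, ENNReal.toReal_one, div_one,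
      ENNReal.toReal_ofReal (zero_le_one.trans hp_one), ENNReal.ofReal_rpow_of_nonneg
        (sub_nonneg.2 hst) (sub_nonneg.2 ((div_le_one (by positivity)).2 hp_one))]
  have hholder : eLpNorm u 1 (volume.restrict (Ioc s t)) ≤
      eLpNorm u (ENNReal.ofReal p) (volume.restrict (Icc 0 1)) *
        ENNReal.ofReal ((t - s) ^ (1 - 1 / p)) :=
    (eLpNorm_le_eLpNorm_mul_rpow_measure_univ hp.out hu.1).trans
      (hmass ▸ mul_le_mul_left (eLpNorm_mono_measure _ hμ) _)
  have hfin := ENNReal.mul_ne_top (Lp.memLp u).2.ne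
    (ENNReal.ofReal_ne_top (r := (t - s) ^ (1 - 1 / p)))
  rw [intervalIntegral.integral_of_le hst, integral_norm_eq_lintegral_enorm hu.1,
    ← eLpNorm_one_eq_lintegral_enorm]
  refine (ENNReal.toReal_mono hfin hholder).trans_eq ?_
  rw [ENNReal.toReal_mul, ENNReal.toReal_ofReal (Real.rpow_nonneg (sub_nonneg.2 hst) _), mul_comm,
    Lp.norm_def]

theorem integral_norm_le_norm (u : ControlSpace U p) : ∫ s in (0 : ℝ)..1, ‖u s‖ ≤ ‖u‖ := by
  simpa using u.integral_norm_le_rpow_mul_norm (left_mem_Icc.2 zero_le_one)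
    (right_mem_Icc.2 zero_le_one) zero_le_one

variable [NormedSpace ℝ U]

theorem norm_integral_le_norm (u : ControlSpace U p) {t : ℝ} (ht : t ∈ Icc (0 : ℝ) 1) :
    ‖∫ s in (0 : ℝ)..t, u s‖ ≤ ‖u‖ :=
  (intervalIntegral.norm_integral_le_integral_norm ht.1).trans
    ((integral_norm_le_integral_norm_of_mem_Icc u.intervalIntegrable ht).trans
      u.integral_norm_le_norm)

theorem integral_add (u v : ControlSpace U p) {t : ℝ} (ht : t ∈ Icc (0 : ℝ) 1) :
    ∫ s in (0 : ℝ)..t, (u + v : ControlSpace U p) s =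
      (∫ s in (0 : ℝ)..t, u s) + ∫ s in (0 : ℝ)..t, v s := by
  have h0 : (0 : ℝ) ∈ Icc (0 : ℝ) 1 := left_mem_Icc.2 zero_le_one
  rw [integral_congr_ae_of_mem_Icc (Lp.coeFn_add u v) ht]
  exact intervalIntegral.integral_add (intervalIntegrable_of_mem_Icc u.intervalIntegrable h0 ht)
    (intervalIntegrable_of_mem_Icc v.intervalIntegrable h0 ht)

theorem dist_integral_le_rpow_mul_norm (u : ControlSpace U p) (s t : Icc (0 : ℝ) 1) :
    dist (∫ r in (0 : ℝ)..s, u r) (∫ r in (0 : ℝ)..t, u r) ≤ dist s t ^ (1 - 1 / p) * ‖u‖ := by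
  wlog hst : (s : ℝ) ≤ t generalizing s t
  · rw [dist_comm, dist_comm s]
    exact this t s (le_of_not_ge hst)
  rw [dist_eq_norm', integral_eq_integral_add_integral u.intervalIntegrable s.2 t.2,
    add_sub_cancel_left, dist_comm, Subtype.dist_eq, Real.dist_eq,
    abs_of_nonneg (sub_nonneg.2 hst)]
  exact (intervalIntegral.norm_integral_le_integral_norm hst).trans
    (u.integral_norm_le_rpow_mul_norm s.2 t.2 hst)

theorem continuous_integral (u : ControlSpace U p) :
    Continuous fun t : Icc (0 : ℝ) 1 => ∫ s in (0 : ℝ)..t, u s := by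
  have := intervalIntegral.continuousOn_primitive_interval' u.intervalIntegrable left_mem_uIcc
  rw [uIcc_of_le zero_le_one] at this
  exact continuousOn_iff_continuous_domRestrict.1 this

variable (U p) in
/-- The Volterra operator `u ↦ ∫₀ᵗ u`. Its compactness replaces weak convergence of controls. -/
def primitive : ControlSpace U p →L[ℝ] BoundedContinuousFunction (Icc (0 : ℝ) 1) U :=
  LinearMap.mkContinuous
    { toFun := fun u => BoundedContinuousFunction.mkOfCompact
        ⟨fun t => ∫ s in (0 : ℝ)..t, u s, continuous_integral u⟩
      map_add' := fun u v => BoundedContinuousFunction.ext fun t => integral_add u v t.2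
      map_smul' := fun c u => BoundedContinuousFunction.ext fun t => integral_smul c u t.2 }
    1 fun u => by
      rw [one_mul]
      exact (BoundedContinuousFunction.norm_le (norm_nonneg _)).2 fun t =>
        u.norm_integral_le_norm t.2

theorem primitive_apply (u : ControlSpace U p) (t : Icc (0 : ℝ) 1) :
    primitive U p u t = ∫ s in (0 : ℝ)..t, u s := rfl

theorem isCompactOperator_primitive [FiniteDimensional ℝ U] (hp_one : 1 < p) :
    IsCompactOperator (primitive U p) := by
  refine (isCompactOperator_iff_isCompact_closure_image_closedBall (primitive U p).toLinearMap
    zero_lt_one).2 ?_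
  refine BoundedContinuousFunction.arzela_ascoli (Metric.closedBall 0 1)
    (isCompact_closedBall _ _) _ ?_ ?_
  · rintro _ t ⟨u, hu, rfl⟩
    rw [mem_closedBall_zero_iff] at hu ⊢
    exact (u.norm_integral_le_norm t.2).trans hu
  · have hmodulus : Tendsto (fun r : ℝ => r ^ (1 - 1 / p)) (𝓝 0) (𝓝 0) := by
      have hpos : 0 < 1 - 1 / p := sub_pos.2 ((div_lt_one (zero_lt_one.trans hp_one)).2 hp_one)
      simpa only [Real.zero_rpow hpos.ne'] using
        (Real.continuousAt_rpow_const 0 _ (.inr hpos.le)).tendsto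
    refine Metric.equicontinuous_of_continuity_modulus _ hmodulus _ ?_
    rintro s t ⟨_, u, hu, rfl⟩
    refine (u.dist_integral_le_rpow_mul_norm s t).trans
      (mul_le_of_le_one_right (Real.rpow_nonneg dist_nonneg _) (mem_closedBall_zero_iff.1 hu))

end ControlSpace

end Primitive

section EndpointMap

variable {U : Type*} [NormedAddCommGroup U] {p : ℝ}

namespace ControlSpace

variable [hp : Fact (1 ≤ ENNReal.ofReal p)]

theorem intervalIntegrable_const_prodMk (c : ℝ) (u : ControlSpace U p) :
    IntervalIntegrable (fun s => (c, u s)) volume 0 1 := by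
  rw [intervalIntegrable_iff_integrableOn_Icc_of_le zero_le_one]
  exact (integrable_const c).prodMk ((Lp.memLp u).integrable hp.out)

theorem integral_norm_const_prodMk_le (c : ℝ) (u : ControlSpace U p) :
    ∫ s in (0 : ℝ)..1, ‖((c, u s) : ℝ × U)‖ ≤ |c| + ‖u‖ :=
  calc ∫ s in (0 : ℝ)..1, ‖((c, u s) : ℝ × U)‖ ≤ ∫ s in (0 : ℝ)..1, (|c| + ‖u s‖) :=
        intervalIntegral.integral_mono zero_le_one (u.intervalIntegrable_const_prodMk c).norm
          (intervalIntegrable_const.add u.intervalIntegrable.norm) fun s =>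
          max_le_add_of_nonneg (abs_nonneg c) (norm_nonneg _)
    _ = |c| + ∫ s in (0 : ℝ)..1, ‖u s‖ := by
        rw [intervalIntegral.integral_add intervalIntegrable_const u.intervalIntegrable.norm,
          intervalIntegral.integral_const, sub_zero, one_smul]
    _ ≤ |c| + ‖u‖ := add_le_add_right u.integral_norm_le_norm _

variable [NormedSpace ℝ U]

theorem norm_integral_prodMk_sub_le [CompleteSpace U] (u v : ControlSpace U p) {t : ℝ}
    (ht : t ∈ Icc (0 : ℝ) 1) :
    ‖∫ s in (0 : ℝ)..t, (((1, u s) : ℝ × U) - (1, v s))‖ ≤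
      ‖primitive U p u - primitive U p v‖ := by
  have h0 : (0 : ℝ) ∈ Icc (0 : ℝ) 1 := left_mem_Icc.2 zero_le_one
  have hu := intervalIntegrable_of_mem_Icc u.intervalIntegrable h0 ht
  have hv := intervalIntegrable_of_mem_Icc v.intervalIntegrable h0 ht
  have hsub : ∫ s in (0 : ℝ)..t, (((1, u s) : ℝ × U) - (1, v s)) =
      ContinuousLinearMap.inr ℝ ℝ U ((primitive U p u - primitive U p v) ⟨t, ht⟩) := by
    rw [BoundedContinuousFunction.sub_apply, primitive_apply, primitive_apply,
      ← intervalIntegral.integral_sub hu hv,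
      ← ContinuousLinearMap.intervalIntegral_comp_comm _ (hu.sub hv)]
    simp
  rw [hsub, ContinuousLinearMap.inr_apply, Prod.norm_mk, norm_zero, max_eq_right (norm_nonneg _)]
  exact BoundedContinuousFunction.norm_coe_le_norm _ _

end ControlSpace

variable {E : Type*} [NormedAddCommGroup E] [NormedSpace ℝ E] [NormedSpace ℝ U]

/-- `F` is the endpoint map `u ↦ γ_u(1)` of the control system `γ' = A(γ) (1, u)` started at `x`;
the constant first component of the control carries the drift. -/
def IsEndpointMap (A : E → ℝ × U →L[ℝ] E) (x : E) (F : ControlSpace U p → E) : Prop :=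
  ∀ u : ControlSpace U p, ∃ γ, IsControlTrajectory A x (fun s => (1, u s)) γ ∧ F u = γ 1

namespace IsEndpointMap

variable {A : E → ℝ × U →L[ℝ] E} {x : E} {F : ControlSpace U p → E} {L : ℝ}
  [Fact (1 ≤ ENNReal.ofReal p)] [CompleteSpace E] [CompleteSpace U]

theorem exists_norm_sub_le_mul (hF : IsEndpointMap A x F) (hA : SecondOrderBounded A L) {C : ℝ}
    (hC : 0 ≤ C) : ∃ K, 0 ≤ K ∧ ∀ u v : ControlSpace U p, ‖u‖ ≤ C → ‖v‖ ≤ C →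
      ‖F u - F v‖ ≤ K * ‖ControlSpace.primitive U p u - ControlSpace.primitive U p v‖ := by
  obtain ⟨K, hK_nonneg, hK⟩ :=
    IsControlTrajectory.exists_norm_sub_le_mul hA x (add_nonneg zero_le_one hC)
  have hbound : ∀ u : ControlSpace U p, ‖u‖ ≤ C →
      ∫ s in (0 : ℝ)..1, ‖((1, u s) : ℝ × U)‖ ≤ 1 + C := fun u hu =>
    (u.integral_norm_const_prodMk_le 1).trans (by simpa using hu)
  refine ⟨K, hK_nonneg, fun u v hu hv => ?_⟩
  obtain ⟨γ, hγ, hFu⟩ := hF u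
  obtain ⟨σ, hσ, hFv⟩ := hF v
  rw [hFu, hFv]
  exact hK hγ hσ (u.intervalIntegrable_const_prodMk 1) (v.intervalIntegrable_const_prodMk 1)
    (hbound u hu) (hbound v hv) (fun t ht => u.norm_integral_prodMk_sub_le v ht) 1
    (right_mem_Icc.2 zero_le_one)

theorem exists_norm_second_difference_le (hF : IsEndpointMap A x F) (hA : SecondOrderBounded A L)
    {C : ℝ} (hC : 0 ≤ C) : ∃ K, ∀ u h : ControlSpace U p, ‖u‖ ≤ C → ‖h‖ ≤ 1 →
      ‖F (u + h + h) - (2 : ℝ) • F (u + h) + F u‖ ≤ K * ‖h‖ ^ 2 := by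
  obtain ⟨K, hK⟩ := IsControlTrajectory.exists_norm_second_difference_le hA x
    (add_nonneg zero_le_one (add_nonneg hC zero_le_one))
  refine ⟨|K|, fun u h hu hh => ?_⟩
  obtain ⟨γ₀, hγ₀, hF₀⟩ := hF u
  obtain ⟨γ₁, hγ₁, hF₁⟩ := hF (u + h)
  obtain ⟨γ₂, hγ₂, hF₂⟩ := hF (u + h + h)
  have hγ₀' := hγ₀.congr_ae (w := fun s => (1, (u + h : ControlSpace U p) s) - (0, h s)) <| by
    filter_upwards [Lp.coeFn_add u h] with s hs
    simp only [hs, Pi.add_apply, Prod.mk_sub_mk, sub_zero, add_sub_cancel_right]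
  have hγ₂' := hγ₂.congr_ae (w := fun s => (1, (u + h : ControlSpace U p) s) + (0, h s)) <| by
    filter_upwards [Lp.coeFn_add (u + h) h] with s hs
    simp only [hs, Pi.add_apply, Prod.mk_add_mk, add_zero]
  have hint : ∫ s in (0 : ℝ)..1, ‖((0, h s) : ℝ × U)‖ ≤ ‖h‖ := by
    simpa using h.integral_norm_const_prodMk_le 0
  have hbound : ‖u + h‖ ≤ C + 1 := norm_add_le_of_le hu hh
  rw [hF₀, hF₁, hF₂]
  refine (hK hγ₀' hγ₁ hγ₂' ((u + h).intervalIntegrable_const_prodMk 1)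
    (h.intervalIntegrable_const_prodMk 0)
    ((ControlSpace.integral_norm_const_prodMk_le 1 (u + h)).trans (by simpa using hbound))
    (hint.trans (by linarith)) 1 (right_mem_Icc.2 zero_le_one)).trans ?_
  exact mul_le_mul (le_abs_self K) (pow_le_pow_left₀
    (intervalIntegral.integral_nonneg zero_le_one fun s _ => norm_nonneg _) hint 2)
    (sq_nonneg _) (abs_nonneg K)

end IsEndpointMap

end EndpointMap

section ControlAffine

theorem exists_secondOrderBounded_controlOperator_of_contDiff {E ι : Type*}
    [NormedAddCommGroup E] [NormedSpace ℝ E] [Fintype ι] {X₀ : E → E} {X : ι → E → E}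
    (hX₀ : ContDiff ℝ 2 X₀) (hX : ∀ i, ContDiff ℝ 2 (X i))
    (hX₀_bdd : ∃ C, ∀ z, ‖X₀ z‖ ≤ C) (hX_bdd : ∃ C, ∀ i z, ‖X i z‖ ≤ C)
    (hX₀_der : ∃ C, ∀ z, ‖fderiv ℝ X₀ z‖ ≤ C) (hX_der : ∃ C, ∀ i z, ‖fderiv ℝ (X i) z‖ ≤ C)
    (hX₀_der2 : ∃ C, ∀ z, ‖fderiv ℝ (fderiv ℝ X₀) z‖ ≤ C)
    (hX_der2 : ∃ C, ∀ i z, ‖fderiv ℝ (fderiv ℝ (X i)) z‖ ≤ C) :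
    ∃ L, SecondOrderBounded (controlOperator X₀ X) L := by
  obtain ⟨_, h₀⟩ := hX₀_bdd
  obtain ⟨_, h₀'⟩ := hX₀_der
  obtain ⟨_, h₀''⟩ := hX₀_der2
  obtain ⟨_, h⟩ := hX_bdd
  obtain ⟨_, h'⟩ := hX_der
  obtain ⟨_, h''⟩ := hX_der2
  exact exists_secondOrderBounded_controlOperator (.of_contDiff hX₀ h₀ h₀' h₀'')
    fun i => .of_contDiff (hX i) (h i) (h' i) (h'' i)

theorem IsTrajectory.isControlTrajectory {n d : ℕ}
    {X₀ : EuclideanSpace ℝ (Fin n) → EuclideanSpace ℝ (Fin n)}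
    {X : Fin d → EuclideanSpace ℝ (Fin n) → EuclideanSpace ℝ (Fin n)}
    {x : EuclideanSpace ℝ (Fin n)} {u : ℝ → EuclideanSpace ℝ (Fin d)}
    {γ : ℝ → EuclideanSpace ℝ (Fin n)} (hγ : IsTrajectory X₀ X x u γ) :
    IsControlTrajectory (controlOperator X₀ X) x (fun s => (1, u s)) γ :=
  ⟨hγ.1, fun t ht => by simpa only [controlOperator_apply, one_smul] using hγ.2 t ht⟩

end ControlAffine

section PalaisSmaleEndpoint

theorem tendsto_norm_comp_subtypeL_ker {E W : Type*} [NormedAddCommGroup E] [NormedSpace ℝ E]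
    [NormedAddCommGroup W] [NormedSpace ℝ W] {l : ℕ → E →L[ℝ] ℝ} {D : ℕ → E →L[ℝ] W}
    (h : ∀ ε > 0, ∃ K : ℕ, ∀ k ≥ K, ∀ v, D k v = 0 → ‖v‖ ≤ 1 → |l k v| ≤ ε) :
    Tendsto (fun k => ‖(l k).comp (D k).ker.subtypeL‖) atTop (𝓝 0) := by
  refine tendsto_order.2
    ⟨fun a ha => .of_forall fun k => ha.trans_le (ContinuousLinearMap.opNorm_nonneg _),
      fun ε hε => ?_⟩
  obtain ⟨K, hK⟩ := h (ε / 2) (half_pos hε)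
  filter_upwards [eventually_ge_atTop K] with k hk
  refine lt_of_le_of_lt ?_ (half_lt_self hε)
  exact ContinuousLinearMap.opNorm_le_of_unit_norm (half_pos hε).le
    fun v hv => hK k hk v v.2 hv.le

theorem stmt17_general {E ι : Type*} [NormedAddCommGroup E] [NormedSpace ℝ E]
    [FiniteDimensional ℝ E] [Fintype ι] {p : ℝ} (hp : 1 < p) [Fact (1 ≤ ENNReal.ofReal p)]
    {A : E → ℝ × EuclideanSpace ℝ ι →L[ℝ] E} {L : ℝ} (hA : SecondOrderBounded A L) {x : E}
    {F : ControlSpace (EuclideanSpace ℝ ι) p → E} (hF : IsEndpointMap A x F)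
    {D : ControlSpace (EuclideanSpace ℝ ι) p → ControlSpace (EuclideanSpace ℝ ι) p →L[ℝ] E}
    (hD : ∀ w, HasFDerivAt F (D w) w) {y : E} (hreg : ∀ u, F u = y → Function.Surjective (D u))
    {u : ℕ → ControlSpace (EuclideanSpace ℝ ι) p} (hu : ∀ k, F (u k) = y)
    (hbdd : ∃ C, ∀ k, ‖u k‖ ≤ C)
    (hPS : ∀ ε > 0, ∃ K : ℕ, ∀ k ≥ K, ∀ h, D (u k) h = 0 → ‖h‖ ≤ 1 →
      |costDifferential hp (u k) h| ≤ ε) :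
    ∃ (φ : ℕ → ℕ) (w : ControlSpace (EuclideanSpace ℝ ι) p),
      StrictMono φ ∧ Tendsto (fun k => u (φ k)) atTop (𝓝 w) := by
  have : CompleteSpace E := FiniteDimensional.complete ℝ E
  have : UniformConvexSpace (ControlSpace (EuclideanSpace ℝ ι) p) := uniformConvexSpace_Lp hp
  obtain ⟨C, hC⟩ := hbdd
  have hF_second : ∀ C, ∃ K, ∀ v h : ControlSpace (EuclideanSpace ℝ ι) p, ‖v‖ ≤ C → ‖h‖ ≤ 1 →
      ‖F (v + h + h) - (2 : ℝ) • F (v + h) + F v‖ ≤ K * ‖h‖ ^ 2 := fun C => by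
    obtain ⟨K, hK⟩ := hF.exists_norm_second_difference_le hA (abs_nonneg C)
    exact ⟨K, fun v h hv => hK v h (hv.trans (le_abs_self C))⟩
  have hF_unif : ∀ C, ∀ ε > 0, ∃ δ > 0, ∀ v w : ControlSpace (EuclideanSpace ℝ ι) p, ‖v‖ ≤ C →
      ‖w‖ ≤ C → ‖ControlSpace.primitive _ p v - ControlSpace.primitive _ p w‖ ≤ δ →
      ‖F v - F w‖ < ε := fun C ε hε => by
    obtain ⟨K, hK_nonneg, hK⟩ := hF.exists_norm_sub_le_mul hA (abs_nonneg C)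
    refine ⟨ε / (K + 1), by positivity, fun v w hv hw hvw => ?_⟩
    calc ‖F v - F w‖ ≤ K * ‖ControlSpace.primitive _ p v - ControlSpace.primitive _ p w‖ :=
          hK v w (hv.trans (le_abs_self C)) (hw.trans (le_abs_self C))
      _ ≤ K * (ε / (K + 1)) := by gcongr
      _ < (K + 1) * (ε / (K + 1)) := by gcongr; exact lt_add_one K
      _ = ε := mul_div_cancel₀ ε (by positivity)
  have hl_bdd : ∀ C, ∃ K, ∀ v : ControlSpace (EuclideanSpace ℝ ι) p, ‖v‖ ≤ C →
      ‖costDifferential hp v‖ ≤ K := fun C =>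
    ⟨Fintype.card ι * (p * (C ^ p + 1)), fun v hv => (norm_costDifferential_le hp v).trans <| by
      gcongr⟩
  have hl_inj : ∀ C, ∀ ε > 0, ∃ δ > 0, ∀ v w : ControlSpace (EuclideanSpace ℝ ι) p, ‖v‖ ≤ C →
      ‖w‖ ≤ C → ‖costDifferential hp v - costDifferential hp w‖ ≤ δ → ‖v - w‖ < ε :=
    fun C ε hε => exists_norm_sub_lt_of_norm_costDifferential_sub_le hp C hε
  have hker : Tendsto (fun k => ‖(costDifferential hp (u k)).comp (D (u k)).ker.subtypeL‖) atTop
      (𝓝 0) := tendsto_norm_comp_subtypeL_ker hPS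
  exact exists_subseq_tendsto_of_tendsto_norm_restrict_ker_fderiv
    (T := ControlSpace.primitive (EuclideanSpace ℝ ι) p)
    (ControlSpace.isCompactOperator_primitive hp) hD hF_second hF_unif hl_bdd hl_inj hreg hu hC hker

end PalaisSmaleEndpoint

/-- Palais–Smale: let `y` be a regular value of the endpoint map
`F(u) = γ_u(1)` (with Fréchet differential `D u` at `u`). If `F(u_k) = y` for all `k`,
the norms `‖u_k‖_p` are bounded, and the restriction of `d_{u_k}J` (where
`J(u) = Σᵢ ∫₀¹ |uᵢ|^p`, `d_uJ(h) = Σᵢ ∫₀¹ p uᵢ|uᵢ|^{p-2} hᵢ`) to the kernel of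
`D (u_k)` tends to `0` in operator norm (expressed with `ε`'s), then `u_k` has a
subsequence converging in the `L^p` norm. -/
theorem stmt17 (n d : ℕ) (p : ℝ) (hp : 1 < p) [Fact (1 ≤ ENNReal.ofReal p)]
    (x : EuclideanSpace ℝ (Fin n))
    (X0 : EuclideanSpace ℝ (Fin n) → EuclideanSpace ℝ (Fin n))
    (X : Fin d → EuclideanSpace ℝ (Fin n) → EuclideanSpace ℝ (Fin n))
    (hX0smooth : ContDiff ℝ (⊤ : ℕ∞) X0) (hXsmooth : ∀ i, ContDiff ℝ (⊤ : ℕ∞) (X i))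
    (hX0bdd : ∃ C, ∀ y, ‖X0 y‖ ≤ C) (hXbdd : ∃ C, ∀ i y, ‖X i y‖ ≤ C)
    (hX0der : ∃ C, ∀ y, ‖fderiv ℝ X0 y‖ ≤ C)
    (hXder : ∃ C, ∀ i y, ‖fderiv ℝ (X i) y‖ ≤ C)
    (hX0der2 : ∃ C, ∀ y, ‖fderiv ℝ (fderiv ℝ X0) y‖ ≤ C)
    (hXder2 : ∃ C, ∀ i y, ‖fderiv ℝ (fderiv ℝ (X i)) y‖ ≤ C)
    (F : Lp (EuclideanSpace ℝ (Fin d)) (ENNReal.ofReal p)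
        (volume.restrict (Set.Icc (0:ℝ) 1)) → EuclideanSpace ℝ (Fin n))
    (hF : ∀ u : Lp (EuclideanSpace ℝ (Fin d)) (ENNReal.ofReal p)
        (volume.restrict (Set.Icc (0:ℝ) 1)),
      ∃ γ, IsTrajectory X0 X x (⇑u) γ ∧ F u = γ 1)
    (D : Lp (EuclideanSpace ℝ (Fin d)) (ENNReal.ofReal p)
        (volume.restrict (Set.Icc (0:ℝ) 1)) →
      (Lp (EuclideanSpace ℝ (Fin d)) (ENNReal.ofReal p)
        (volume.restrict (Set.Icc (0:ℝ) 1)) →L[ℝ] EuclideanSpace ℝ (Fin n)))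
    (hD : ∀ w, HasFDerivAt F (D w) w)
    (y : EuclideanSpace ℝ (Fin n))
    (hreg : ∀ u, F u = y → Function.Surjective (D u))
    (u : ℕ → Lp (EuclideanSpace ℝ (Fin d)) (ENNReal.ofReal p)
      (volume.restrict (Set.Icc (0:ℝ) 1)))
    (hu : ∀ k, F (u k) = y)
    (hbdd : ∃ C, ∀ k, ‖u k‖ ≤ C)
    (hPS : ∀ ε > 0, ∃ K : ℕ, ∀ k ≥ K,
      ∀ h : Lp (EuclideanSpace ℝ (Fin d)) (ENNReal.ofReal p)
        (volume.restrict (Set.Icc (0:ℝ) 1)),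
        D (u k) h = 0 → ‖h‖ ≤ 1 →
        |∑ i, ∫ t, p * (u k t i * |u k t i| ^ (p - 2)) * h t i
          ∂(volume.restrict (Set.Icc (0:ℝ) 1))| ≤ ε) :
    ∃ (φ : ℕ → ℕ) (w : Lp (EuclideanSpace ℝ (Fin d)) (ENNReal.ofReal p)
        (volume.restrict (Set.Icc (0:ℝ) 1))),
      StrictMono φ ∧ Tendsto (fun k => u (φ k)) atTop (𝓝 w) := by
  obtain ⟨L, hA⟩ := exists_secondOrderBounded_controlOperator_of_contDiff
    (contDiff_infty.1 hX0smooth 2) (fun i => contDiff_infty.1 (hXsmooth i) 2)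
    hX0bdd hXbdd hX0der hXder hX0der2 hXder2
  exact stmt17_general hp hA (fun u => (hF u).imp fun _ hγ => hγ.imp_left (·.isControlTrajectory))
    hD hreg hu hbdd hPS
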